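/- (Perron) The numbers √12, √13 and (65 + 9√3)/22 belong to the Lagrange spectrum L, while M ∩ (√12, √13) = ∅ and M ∩ (√13, (65 + 9√3)/22) = ∅; in particular the open intervals (√12, √13) and (√13, (65 + 9√3)/22) are gaps of both spectra. -/

import Mathlib

open scoped ENNReal

/-- The distance from a real number to the nearest integer. -/
noncomputable def distNearestInt (x : ℝ) : ℝ := |x - round x|

/-- The best constant of Diophantine approximation of `α`,
`ℓ(α) = limsup_{q → ∞} 1 / (q ⬝ ‖q α‖) ∈ [0, ∞]`. -/
noncomputable def lagrangeVal (α : ℝ) : ℝ≥0∞ :=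
  Filter.limsup (fun q : ℕ => ENNReal.ofReal (1 / (q * distNearestInt (q * α)))) Filter.atTop

/-- The Lagrange spectrum: the set of finite values `ℓ(α)` over irrational `α`. -/
def LagrangeSpectrum : Set ℝ :=
  {t | ∃ α : ℝ, Irrational α ∧ lagrangeVal α ≠ ⊤ ∧ (lagrangeVal α).toReal = t}

/-- The best constant of Diophantine approximation of the binary quadratic form
`h(x,y) = a x² + b x y + c y²`, namely `m(h) = sup_{(p,q) ≠ (0,0)} √Δ(h) / |h(p,q)| ∈ (0, ∞]`. -/
noncomputable def markovVal (a b c : ℝ) : ℝ≥0∞ :=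
  ⨆ (pq : ℤ × ℤ) (_ : pq ≠ (0, 0)),
    ENNReal.ofReal (Real.sqrt (b ^ 2 - 4 * a * c)) /
      ENNReal.ofReal |a * (pq.1 : ℝ) ^ 2 + b * pq.1 * pq.2 + c * (pq.2 : ℝ) ^ 2|

/-- The Markov spectrum: the set of finite values `m(h)` over real indefinite binary
quadratic forms `h` with positive discriminant. -/
def MarkovSpectrum : Set ℝ :=
  {t | ∃ a b c : ℝ, 0 < b ^ 2 - 4 * a * c ∧ markovVal a b c ≠ ⊤ ∧ (markovVal a b c).toReal = t}

section

open Filter Topology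

/-! ### Bounds for indefinite binary quadratic forms -/

/-- `T` bounds `√Δ / |h|` on nonzero integer vectors, for `h = a x² + b x y + c y²`. -/
def IsMarkovBound (a b c T : ℝ) : Prop :=
  ∀ p q : ℤ, (p ≠ 0 ∨ q ≠ 0) →
    √(b ^ 2 - 4 * a * c) ≤ T * |a * (p : ℝ) ^ 2 + b * p * q + c * (q : ℝ) ^ 2|

namespace IsMarkovBound

variable {a b c T : ℝ}

theorem shift (h : IsMarkovBound a b c T) (k : ℤ) :
    IsMarkovBound a (b + 2 * a * k) (c + b * k + a * k ^ 2) T := by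
  intro p q hpq
  have := h (p + k * q) q (by
    by_contra! hc
    obtain ⟨h1, rfl⟩ := hc
    simp_all)
  push_cast at this
  convert this using 2 <;> ring_nf

theorem shift_iff (k : ℤ) :
    IsMarkovBound a (b + 2 * a * k) (c + b * k + a * k ^ 2) T ↔ IsMarkovBound a b c T := by
  refine ⟨fun h => ?_, fun h => h.shift k⟩
  have := h.shift (-k)
  push_cast at this
  convert this using 1 <;> ring

theorem swap (h : IsMarkovBound a b c T) : IsMarkovBound c b a T := by
  intro p q hpq
  convert h q p hpq.symm using 3 <;> ring_nf

theorem swap_iff : IsMarkovBound c b a T ↔ IsMarkovBound a b c T :=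
  ⟨swap, swap⟩

theorem flip (h : IsMarkovBound a b c T) : IsMarkovBound a (-b) c T := by
  intro p q hpq
  have := h p (-q) (by simpa using hpq)
  push_cast at this
  convert this using 3 <;> ring_nf

theorem flip_iff : IsMarkovBound a (-b) c T ↔ IsMarkovBound a b c T :=
  ⟨fun h => by simpa using h.flip, flip⟩

theorem smul (h : IsMarkovBound a b c T) (k : ℝ) :
    IsMarkovBound (k * a) (k * b) (k * c) T := by
  intro p q hpq
  have := mul_le_mul_of_nonneg_left (h p q hpq) (abs_nonneg k)
  rw [← Real.sqrt_sq_eq_abs k, ← Real.sqrt_mul (sq_nonneg k), Real.sqrt_sq_eq_abs] at this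
  calc _ = √(k ^ 2 * (b ^ 2 - 4 * a * c)) := by ring_nf
    _ ≤ _ := this
    _ = T * (|k| * |a * (p : ℝ) ^ 2 + b * p * q + c * (q : ℝ) ^ 2|) := by ring
    _ = _ := by rw [← abs_mul]; ring_nf

theorem smul_iff {k : ℝ} (hk : k ≠ 0) :
    IsMarkovBound (k * a) (k * b) (k * c) T ↔ IsMarkovBound a b c T := by
  refine ⟨fun h => ?_, fun h => h.smul k⟩
  have := h.smul k⁻¹
  simpa [hk] using this

theorem ne_zero (h : IsMarkovBound a b c T) (hΔ : 0 < b ^ 2 - 4 * a * c) {p q : ℤ}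
    (hpq : p ≠ 0 ∨ q ≠ 0) : a * (p : ℝ) ^ 2 + b * p * q + c * (q : ℝ) ^ 2 ≠ 0 := by
  intro h0
  have := h p q hpq
  rw [h0, abs_zero, mul_zero] at this
  exact absurd (Real.sqrt_pos.2 hΔ) this.not_gt

theorem pos (h : IsMarkovBound a b c T) (hΔ : 0 < b ^ 2 - 4 * a * c) : 0 < T :=
  pos_of_mul_pos_left ((Real.sqrt_pos.2 hΔ).trans_le (h 1 0 (by simp))) (abs_nonneg _)

theorem markovVal_le (h : IsMarkovBound a b c T) (hΔ : 0 < b ^ 2 - 4 * a * c) :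
    markovVal a b c ≤ ENNReal.ofReal T := by
  refine iSup₂_le fun ⟨p, q⟩ hpq => ?_
  have hpq' : p ≠ 0 ∨ q ≠ 0 := by
    by_contra! hc
    exact hpq (by simp [hc.1, hc.2])
  have h0 := abs_pos.2 (h.ne_zero hΔ hpq')
  rw [← ENNReal.ofReal_div_of_pos h0]
  exact ENNReal.ofReal_le_ofReal ((div_le_iff₀ h0).2 (h p q hpq'))

theorem toReal_markovVal (hΔ : 0 < b ^ 2 - 4 * a * c) (h : markovVal a b c ≠ ⊤) :
    IsMarkovBound a b c (markovVal a b c).toReal := by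
  intro p q hpq
  have hle : ENNReal.ofReal (√(b ^ 2 - 4 * a * c)) /
      ENNReal.ofReal |a * (p : ℝ) ^ 2 + b * p * q + c * (q : ℝ) ^ 2| ≤ markovVal a b c := by
    refine le_iSup₂_of_le (p, q) ?_ le_rfl
    intro hc
    simp only [Prod.mk.injEq] at hc
    tauto
  have hs := Real.sqrt_pos.2 hΔ
  have h0 : 0 < |a * (p : ℝ) ^ 2 + b * p * q + c * (q : ℝ) ^ 2| := by
    by_contra! hc
    rw [ENNReal.ofReal_of_nonpos hc, ENNReal.div_zero (by simpa using hs)] at hle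
    exact h (top_le_iff.1 hle)
  rw [← ENNReal.ofReal_div_of_pos h0, ENNReal.ofReal_le_iff_le_toReal h, div_le_iff₀ h0] at hle
  exact hle

/-- Every form bounded away from zero is equivalent, up to a factor, to `(p - q x) (p + q y)` with
`x > 1` and `0 < y < 1`. -/
theorem exists_reduced {t : ℝ} (h : IsMarkovBound a b c t) (hΔ : 0 < b ^ 2 - 4 * a * c) :
    ∃ x y : ℝ, 1 < x ∧ 0 < y ∧ y < 1 ∧
      ∀ T, IsMarkovBound 1 (y - x) (-(x * y)) T ↔ IsMarkovBound a b c T := by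
  have ht := h.pos hΔ
  let W : Set (ℝ × ℝ × ℝ) := {f | 0 < f.2.1 ^ 2 - 4 * f.1 * f.2.2 ∧
    f.2.1 ^ 2 - 4 * f.1 * f.2.2 = b ^ 2 - 4 * a * c ∧
    ∀ T, IsMarkovBound f.1 f.2.1 f.2.2 T ↔ IsMarkovBound a b c T}
  let μ := sInf ((fun f => |f.1|) '' W)
  have hbdd : ∀ f ∈ W, √(b ^ 2 - 4 * a * c) / t ≤ |f.1| := by
    rintro ⟨A, B, C⟩ ⟨-, h1, h2⟩
    have := (h2 t).2 h 1 0 (by simp)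
    simp only [h1] at this
    rw [div_le_iff₀ ht]
    simpa [mul_comm] using this
  have hne : ((fun f : ℝ × ℝ × ℝ => |f.1|) '' W).Nonempty :=
    ⟨_, (a, b, c), ⟨hΔ, rfl, fun _ => Iff.rfl⟩, rfl⟩
  have hμ : 0 < μ := by
    refine (div_pos (Real.sqrt_pos.2 hΔ) ht).trans_le (le_csInf hne ?_)
    rintro _ ⟨f, hf, rfl⟩
    exact hbdd f hf
  have hμle : ∀ f ∈ W, μ ≤ |f.1| := fun f hf =>
    csInf_le ⟨_, by rintro _ ⟨f, hf, rfl⟩; exact hbdd f hf⟩ ⟨f, hf, rfl⟩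
  have hshift : ∀ A B C, (A, B, C) ∈ W → ∀ k : ℤ,
      (A, B + 2 * A * k, C + B * k + A * k ^ 2) ∈ W := by
    rintro A B C ⟨h1, h2, h3⟩ k
    have : (B + 2 * A * k) ^ 2 - 4 * A * (C + B * k + A * k ^ 2) = B ^ 2 - 4 * A * C := by ring
    exact ⟨by simpa only [this] using h1, by simpa only [this] using h2,
      fun T => (shift_iff k).trans (h3 T)⟩
  have hswap : ∀ A B C, (A, B, C) ∈ W → (C, B, A) ∈ W := by
    rintro A B C ⟨h1, h2, h3⟩
    have : B ^ 2 - 4 * C * A = B ^ 2 - 4 * A * C := by ring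
    exact ⟨by simpa only [this] using h1, by simpa only [this] using h2,
      fun T => swap_iff.trans (h3 T)⟩
  have hflip : ∀ A B C, (A, B, C) ∈ W → (A, -B, C) ∈ W := by
    rintro A B C ⟨h1, h2, h3⟩
    have : (-B) ^ 2 - 4 * A * C = B ^ 2 - 4 * A * C := by ring
    exact ⟨by simpa only [this] using h1, by simpa only [this] using h2,
      fun T => flip_iff.trans (h3 T)⟩
  have hneg : ∀ A B C, (A, B, C) ∈ W → (-A, -B, -C) ∈ W := by
    rintro A B C ⟨h1, h2, h3⟩
    have : (-B) ^ 2 - 4 * (-A) * (-C) = B ^ 2 - 4 * A * C := by ring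
    refine ⟨by simpa only [this] using h1, by simpa only [this] using h2, fun T => ?_⟩
    rw [← h3 T, ← smul_iff (a := A) (b := B) (c := C) (k := -1) (by norm_num)]
    simp
  obtain ⟨A, B, C, hW, hA, hB0, hBA, hAμ⟩ : ∃ A B C, (A, B, C) ∈ W ∧ 0 < A ∧ 0 ≤ B ∧ B ≤ A ∧
      A < 11 / 10 * μ := by
    obtain ⟨_, ⟨⟨A, B, C⟩, hf, rfl⟩, hlt⟩ :=
      exists_lt_of_csInf_lt hne (show μ < 11 / 10 * μ by linarith)
    obtain ⟨A, B, C, hf, hA, hlt⟩ : ∃ A B C, (A, B, C) ∈ W ∧ 0 < A ∧ A < 11 / 10 * μ := by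
      have := hμle _ hf
      rcases le_total 0 A with h0 | h0
      · simp only [abs_of_nonneg h0] at this hlt
        exact ⟨A, B, C, hf, by linarith, hlt⟩
      · simp only [abs_of_nonpos h0] at this hlt
        exact ⟨-A, -B, -C, hneg _ _ _ hf, by linarith, hlt⟩
    have hr := abs_sub_round (-B / (2 * A))
    set k := round (-B / (2 * A))
    have hBk : |B + 2 * A * k| ≤ A := by
      have : B + 2 * A * k = -(2 * A) * (-B / (2 * A) - k) := by field_simp; ring
      rw [this, abs_mul, abs_neg, abs_of_pos (by positivity)]
      nlinarith
    rcases le_total 0 (B + 2 * A * k) with h0 | h0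
    · exact ⟨_, _, _, hshift _ _ _ hf k, hA, h0, (le_abs_self _).trans hBk, hlt⟩
    · exact ⟨_, _, _, hflip _ _ _ (hshift _ _ _ hf k), hA, by linarith,
        (neg_le_abs _).trans hBk, hlt⟩
  have hC := hμle _ (hswap _ _ _ hW)
  have hABC := hμle _ (hswap _ _ _ (hshift _ _ _ hW (-1)))
  have hΔ' := hW.1
  simp only at hC hABC hΔ'
  push_cast at hABC
  have hC0 : C < 0 := by
    by_contra! h0
    rw [abs_of_nonneg h0] at hC
    nlinarith
  rw [abs_of_neg hC0] at hC
  have hABC' : A - B + C < 0 := by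
    by_contra! h0
    rw [abs_of_nonneg (by linarith)] at hABC
    linarith
  rw [abs_of_neg (by linarith)] at hABC
  have h4 : (2 * A) ^ 2 < B ^ 2 - 4 * A * C := by
    have h1 : A / (11 / 10) ≤ B - A - C := by linarith
    nlinarith [mul_le_mul_of_nonneg_left h1 hA.le]
  set d := √(B ^ 2 - 4 * A * C) with hd
  have hd2 : d ^ 2 = B ^ 2 - 4 * A * C := Real.sq_sqrt hΔ'.le
  have hdA : 2 * A < d := Real.lt_sqrt_of_sq_lt h4
  set s := (B + d) / (2 * A) with hs
  have hsA : 2 * A * s = B + d := by rw [hs]; field_simp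
  clear_value s
  have hfloor := Int.floor_le s
  have hlt := Int.lt_floor_add_one s
  set k := ⌊s⌋
  have hroot : A * s ^ 2 - B * s + C = 0 := by
    have : 4 * A * (A * s ^ 2 - B * s + C) = 0 := by
      linear_combination (2 * A * s + B + d - 2 * B) * hsA + hd2
    simpa [hA.ne'] using this
  have hsk : s ≠ k := by
    intro hk
    refine ((hW.2.2 t).2 h).ne_zero hΔ' (p := -k) (q := 1) (by simp) ?_
    push_cast
    rw [← hk]
    linear_combination hroot
  refine ⟨d / A - (s - k), s - k, ?_, ?_, by linarith, fun T => ?_⟩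
  · have : 2 < d / A := by rwa [lt_div_iff₀ hA]
    linarith
  · exact sub_pos.2 (lt_of_le_of_ne hfloor hsk.symm)
  · rw [← (hshift _ _ _ hW (-k)).2.2 T, ← smul_iff (k := A) hA.ne']
    have e1 : A * 1 = A := mul_one A
    have e2 : A * (s - k - (d / A - (s - k))) = B + 2 * A * (-k : ℤ) := by
      push_cast
      field_simp
      linear_combination hsA
    have e3 : A * -((d / A - (s - k)) * (s - k)) = C + B * (-k : ℤ) + A * (-k : ℤ) ^ 2 := by
      have : d / A = 2 * s - B / A := by field_simp; linear_combination -hsA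
      rw [this]
      push_cast
      field_simp
      linear_combination -hroot
    simp only [e1, e2, e3]

end IsMarkovBound

/-! ### Normalised values of reduced forms -/

/-- The value at `(p, q)` of `|(p - q x) (p + q y)|`, normalised to discriminant one. -/
noncomputable def normVal (x y p q : ℝ) : ℝ := |(p - q * x) * (p + q * y)| / (x + y)

theorem normVal_step {n x y : ℝ} (hx : 0 < x) (hy : 0 < n + y) (p q : ℝ) :
    normVal (n + 1 / x) y p q = normVal x (1 / (n + y)) q (p - n * q) := by
  have e1 : p - q * (n + 1 / x) = -(1 / x) * (q - (p - n * q) * x) := by field_simp; ring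
  have e2 : p + q * y = (n + y) * (q + (p - n * q) * (1 / (n + y))) := by field_simp; ring
  have e3 : n + 1 / x + y = (n + y) * (1 / x) * (x + 1 / (n + y)) := by field_simp; ring
  have e4 : 0 < (n + y) * (1 / x) := by positivity
  unfold normVal
  rw [e3, show (p - q * (n + 1 / x)) * (p + q * y) = -((n + y) * (1 / x)) *
    ((q - (p - n * q) * x) * (q + (p - n * q) * (1 / (n + y)))) by rw [e1, e2]; ring,
    abs_mul, abs_neg, abs_of_pos e4, mul_div_mul_left _ _ e4.ne']

theorem normVal_swap {x y : ℝ} (hx : 0 < x) (hy : 0 < y) (p q : ℝ) :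
    normVal x y p q = normVal (1 / y) (1 / x) (-q) p := by
  have e1 : (-q - p * (1 / y)) * (-q + p * (1 / x)) =
      -(1 / (x * y)) * ((p - q * x) * (p + q * y)) := by field_simp; ring
  have e2 : 1 / y + 1 / x = 1 / (x * y) * (x + y) := by field_simp
  have e3 : 0 < 1 / (x * y) := by positivity
  unfold normVal
  rw [e1, e2, abs_mul (-(1 / (x * y))), abs_neg, abs_of_pos e3, mul_div_mul_left _ _ e3.ne']

theorem normVal_neg (x y p q : ℝ) : normVal x y (-p) (-q) = normVal x y p q := by
  unfold normVal
  congr 2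
  ring

theorem normVal_zero (x y p : ℝ) :
    normVal x y p 0 = p ^ 2 / (x + y) := by
  simp [normVal, ← sq, abs_of_nonneg (sq_nonneg p)]

/-- Vectors leaving the positive cone after one continued fraction step have large value. -/
theorem half_le_normVal {n : ℤ} {x y : ℝ} (hx : 0 < x) (hy : 0 ≤ y) {p q : ℤ} (hp : 0 < p)
    (hq : 0 < q) (hneg : p - n * q < 0) : 1 / 2 ≤ normVal (n + 1 / x) y p q := by
  have hp' : (1 : ℝ) ≤ p := by exact_mod_cast hp
  have hq' : (1 : ℝ) ≤ q := by exact_mod_cast hq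
  have hn : (p : ℝ) - n * q ≤ -1 := by exact_mod_cast Int.le_sub_one_of_lt hneg
  have hx' : 0 < 1 / x := by positivity
  have hu : 1 ≤ q * (n + 1 / x) - p := by nlinarith
  have hv : 1 ≤ p + q * y := by nlinarith
  have hsum : 0 < n + 1 / x + y := by nlinarith
  have hs : n + 1 / x + y ≤ (q * (n + 1 / x) - p) + (p + q * y) := by nlinarith
  unfold normVal
  rw [le_div_iff₀ hsum, abs_mul, abs_sub_comm,
    abs_of_nonneg (by linarith : 0 ≤ q * (n + 1 / x) - p),
    abs_of_nonneg (by linarith : 0 ≤ p + q * y)]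
  nlinarith

theorem isMarkovBound_reduced_iff {x y T : ℝ} (hxy : 0 < x + y) :
    IsMarkovBound 1 (y - x) (-(x * y)) T ↔
      ∀ p q : ℤ, (p ≠ 0 ∨ q ≠ 0) → 1 ≤ T * normVal x y p q := by
  refine forall₂_congr fun p q => imp_congr_right fun _ => ?_
  rw [show (y - x) ^ 2 - 4 * 1 * -(x * y) = (x + y) ^ 2 by ring, Real.sqrt_sq hxy.le,
    normVal, ← mul_div_assoc, le_div_iff₀ hxy, one_mul]
  ring_nf

theorem isMarkovBound_reduced_swap {x y T : ℝ} (hx : 0 < x) (hy : 0 < y) :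
    IsMarkovBound 1 (1 / x - 1 / y) (-(1 / y * (1 / x))) T ↔
      IsMarkovBound 1 (y - x) (-(x * y)) T := by
  have hk : -(x * y) ≠ 0 := by simp [hx.ne', hy.ne']
  rw [← IsMarkovBound.smul_iff hk, ← IsMarkovBound.swap_iff, ← IsMarkovBound.flip_iff]
  have e1 : -(x * y) * -(1 / y * (1 / x)) = 1 := by field_simp
  have e2 : -(-(x * y) * (1 / x - 1 / y)) = y - x := by field_simp
  rw [e1, e2, mul_one]

theorem isMarkovBound_reduced_step {x y T : ℝ} (n : ℤ) (hx : 0 < x) (hy : 0 < n + y) :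
    IsMarkovBound 1 (1 / (n + y) - x) (-(x * (1 / (n + y)))) T ↔
      IsMarkovBound 1 (y - (n + 1 / x)) (-((n + 1 / x) * y)) T := by
  have hk : -(x * (1 / (n + y))) ≠ 0 := by
    have := mul_pos hx (one_div_pos.2 hy)
    linarith
  rw [← IsMarkovBound.shift_iff (a := 1) (b := y - (n + 1 / x)) n, ← IsMarkovBound.swap_iff,
    ← IsMarkovBound.smul_iff (a := 1) hk]
  have e1 :
      -(x * (1 / (n + y))) * (-((n + 1 / x) * y) + (y - (n + 1 / x)) * n + 1 * n ^ 2) = 1 := by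
    field_simp; ring
  have e2 : -(x * (1 / (n + y))) * (y - (n + 1 / x) + 2 * 1 * n) = 1 / (n + y) - x := by
    field_simp; ring
  rw [e1, e2, mul_one]

/-! ### Systems of reduced pairs -/

theorem sqrt_twelve : √12 = 2 * √3 := by
  rw [Real.sqrt_eq_iff_mul_self_eq (by norm_num) (by positivity)]
  linarith [Real.mul_self_sqrt (show (0 : ℝ) ≤ 3 by norm_num)]

/-- A set of pairs `(x, y)` of reduced roots `x > 1`, `-1 < -y < 0`, closed under the continued
fraction step and under reversal. -/
structure IsReducedSystem (S : Set (ℝ × ℝ)) : Prop where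
  one_lt : ∀ {x y}, (x, y) ∈ S → 1 < x
  pos : ∀ {x y}, (x, y) ∈ S → 0 < y
  swap : ∀ {x y}, (x, y) ∈ S → (1 / y, 1 / x) ∈ S
  step : ∀ {x y}, (x, y) ∈ S → ∃ n : ℕ, 1 ≤ n ∧ ∃ x', x = n + 1 / x' ∧ (x', 1 / (n + y)) ∈ S

namespace IsReducedSystem

variable {S : Set (ℝ × ℝ)} {x y : ℝ}

theorem one_le_mul_normVal_of_nonneg (hS : IsReducedSystem S) {T : ℝ} (hT : 2 ≤ T)
    (hle : ∀ x y, (x, y) ∈ S → x + y ≤ T) (m : ℕ) : ∀ x y, (x, y) ∈ S → ∀ p q : ℤ, 0 < p → 0 ≤ q →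
      p + q ≤ m → 1 ≤ T * normVal x y p q := by
  induction m with
  | zero => intros; omega
  | succ m ih =>
    intro x y hxy p q hp hq hm
    obtain ⟨n, hn, x', rfl, hx'⟩ := hS.step hxy
    have hx0 := hS.one_lt hx'
    have hy0 := hS.pos hxy
    rcases hq.eq_or_lt with rfl | hq
    · have hpos : 0 < (n : ℝ) + 1 / x' + y := by positivity
      have hp' : (1 : ℝ) ≤ p := by exact_mod_cast hp
      rw [Int.cast_zero, normVal_zero, ← mul_div_assoc, le_div_iff₀ hpos]
      have : (1 : ℝ) ≤ (p : ℝ) ^ 2 := one_le_pow₀ hp'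
      nlinarith [hle _ _ hxy]
    · rcases lt_or_ge (p - (n : ℤ) * q) 0 with h | h
      · have := half_le_normVal (n := n) (x := x') (by linarith) hy0.le hp hq h
        rw [Int.cast_natCast] at this
        nlinarith
      · rw [normVal_step (by linarith) (by positivity)]
        have := ih _ _ hx' q (p - (n : ℤ) * q) hq h (by
          have : q ≤ (n : ℤ) * q := le_mul_of_one_le_left hq.le (by exact_mod_cast hn)
          push_cast at hm
          omega)
        push_cast at this
        exact this

theorem isMarkovBound (hS : IsReducedSystem S) {T : ℝ} (hT : 2 ≤ T)
    (hle : ∀ x y, (x, y) ∈ S → x + y ≤ T) (hxy : (x, y) ∈ S) :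
    IsMarkovBound 1 (y - x) (-(x * y)) T := by
  have key := fun {x y} (h : (x, y) ∈ S) (p q : ℤ) hp hq =>
    hS.one_le_mul_normVal_of_nonneg hT hle (p + q).toNat x y h p q hp hq (Int.self_le_toNat _)
  have hx := hS.one_lt hxy
  have hy := hS.pos hxy
  have key' : ∀ p q : ℤ, (0 < p ∧ 0 ≤ q ∨ 0 ≤ p ∧ q < 0) → 1 ≤ T * normVal x y p q := by
    rintro p q (⟨hp, hq⟩ | ⟨hp, hq⟩)
    · exact key hxy p q hp hq
    · rw [normVal_swap (by linarith) hy]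
      have := key (hS.swap hxy) (-q) p (by omega) hp
      push_cast at this
      exact this
  refine (isMarkovBound_reduced_iff (by linarith)).2 fun p q hpq => ?_
  by_cases h : 0 < p ∧ 0 ≤ q ∨ 0 ≤ p ∧ q < 0
  · exact key' p q h
  · rw [← normVal_neg]
    have := key' (-p) (-q) (by omega)
    push_cast at this
    exact this

theorem lt_one (hS : IsReducedSystem S) (hxy : (x, y) ∈ S) : y < 1 := by
  have := hS.one_lt (hS.swap hxy)
  rwa [lt_div_iff₀ (hS.pos hxy), one_mul] at this

/-- Reversal of the digit sequence around the current digit. -/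
theorem flip (hS : IsReducedSystem S) {n x' : ℝ} (hx' : (x', 1 / (n + y)) ∈ S) :
    (n + y, 1 / x') ∈ S := by
  simpa using hS.swap hx'

theorem exists_eq_of_lt (hS : IsReducedSystem S) (hxy : (x, y) ∈ S) {N : ℕ} (h : x < N + 1) :
    ∃ n : ℕ, 1 ≤ n ∧ n ≤ N ∧ ∃ x', x = n + 1 / x' ∧ (x', 1 / (n + y)) ∈ S := by
  obtain ⟨n, hn, x', rfl, hx'⟩ := hS.step hxy
  refine ⟨n, hn, ?_, x', rfl, hx'⟩
  have : 0 < 1 / x' := one_div_pos.2 (by linarith [hS.one_lt hx'])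
  have : (n : ℝ) < N + 1 := by linarith
  exact Nat.lt_succ_iff.1 (by exact_mod_cast this)

theorem golden_le (hS : IsReducedSystem S) (h : ∀ x y, (x, y) ∈ S → x < 2 → 4 / 3 < x)
    (hxy : (x, y) ∈ S) : (1 + √3) / 2 ≤ x := by
  have h3 : √3 ^ 2 = 3 := Real.sq_sqrt (by norm_num)
  have h0 : 0 ≤ √3 := Real.sqrt_nonneg 3
  have hb : ∀ z ∈ Prod.fst '' S, (1 : ℝ) ≤ z := by
    rintro _ ⟨⟨z, w⟩, hz, rfl⟩
    exact (hS.one_lt hz).le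
  have hne : (Prod.fst '' S).Nonempty := ⟨_, _, hxy, rfl⟩
  set s := sInf (Prod.fst '' S) with hs
  have hs1 : 1 ≤ s := le_csInf hne hb
  have hsle : ∀ {x y}, (x, y) ∈ S → s ≤ x := fun hz => csInf_le ⟨1, hb⟩ ⟨_, hz, rfl⟩
  refine le_trans ?_ (hsle hxy)
  have key : (3 * s + 1) / (2 * s + 1) ≤ s := by
    refine le_csInf hne ?_
    rintro _ ⟨⟨z, w⟩, hz, rfl⟩
    rw [div_le_iff₀ (by linarith)]
    simp only
    rcases lt_or_ge z 2 with hz2 | hz2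
    · obtain ⟨n, hn1, hn2, x', rfl, hx'⟩ := hS.exists_eq_of_lt hz (N := 1) (by norm_num; exact hz2)
      obtain rfl : n = 1 := le_antisymm hn2 hn1
      have h4 := h _ _ hz hz2
      have hx1 := hS.one_lt hx'
      have hx3 : x' < 3 := by
        by_contra! hc
        have := one_div_le_one_div_of_le (by norm_num) hc
        push_cast at h4
        linarith
      obtain ⟨m, hm1, hm2, x'', rfl, hx''⟩ := hS.exists_eq_of_lt hx' (N := 2)
        (by norm_num; exact hx3)
      have hsx := hsle hx''
      have hm : (m : ℝ) ≤ 2 := by exact_mod_cast hm2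
      have h5 : (m : ℝ) + 1 / x'' ≤ 2 + 1 / s := by
        have := one_div_le_one_div_of_le (by linarith) hsx
        linarith
      have h6 := one_div_le_one_div_of_le (by linarith) h5
      have h7 : 1 / (2 + 1 / s) = s / (2 * s + 1) := by field_simp
      rw [h7, div_le_iff₀ (by linarith)] at h6
      push_cast
      linarith
    · nlinarith
  rw [div_le_iff₀ (by linarith)] at key
  nlinarith

theorem one_div_le (hS : IsReducedSystem S) (h : ∀ x y, (x, y) ∈ S → x < 2 → 4 / 3 < x)
    (hxy : (x, y) ∈ S) : 1 / x ≤ √3 - 1 := by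
  have h3 : √3 ^ 2 = 3 := Real.sq_sqrt (by norm_num)
  have hx := hS.one_lt hxy
  rw [div_le_iff₀ (by linarith)]
  have h1 : 1 ≤ √3 := Real.one_le_sqrt.2 (by norm_num)
  nlinarith [hS.golden_le h hxy]

theorem snd_le (hS : IsReducedSystem S) (h : ∀ x y, (x, y) ∈ S → x < 2 → 4 / 3 < x)
    (hxy : (x, y) ∈ S) : y ≤ √3 - 1 := by
  simpa using hS.one_div_le h (hS.swap hxy)

/-- If no digit exceeds `2`, every value is at most `√12`. -/
theorem add_le_of_lt_three (hS : IsReducedSystem S) (h : ∀ x y, (x, y) ∈ S → x < 3)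
    (hxy : (x, y) ∈ S) : x + y ≤ √12 := by
  have h12 := sqrt_twelve
  have h' : ∀ x y, (x, y) ∈ S → x < 2 → 4 / 3 < x := by
    intro x y hxy hx
    obtain ⟨n, hn1, hn2, x', rfl, hx'⟩ := hS.exists_eq_of_lt hxy (N := 1) (by norm_num; exact hx)
    obtain rfl : n = 1 := le_antisymm hn2 hn1
    have := one_div_lt_one_div_of_lt (by linarith [hS.one_lt hx']) (h _ _ hx')
    push_cast
    linarith
  obtain ⟨n, hn1, hn2, x', rfl, hx'⟩ := hS.exists_eq_of_lt hxy (N := 2)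
    (by norm_num; exact h _ _ hxy)
  have hn : (n : ℝ) ≤ 2 := by exact_mod_cast hn2
  linarith [hS.one_div_le h' hx', hS.snd_le h' hxy]

/-- If all digits are at least `3` and the pairs are bounded by `4`, all digits equal `3`. -/
theorem add_eq_sqrt_thirteen (hS : IsReducedSystem S) (h : ∀ x y, (x, y) ∈ S → 3 ≤ x)
    (h4 : ∀ x y, (x, y) ∈ S → x < 4) (hxy : (x, y) ∈ S) : x + y = √13 := by
  have h13 : √13 ^ 2 = 13 := Real.sq_sqrt (by norm_num)
  have h0 : 3 < √13 := Real.lt_sqrt_of_sq_lt (by norm_num)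
  set X : ℝ := (3 + √13) / 2 with hX
  have hX3 : 3 < X := by rw [hX]; linarith
  have hXX : X = 3 + 1 / X := by field_simp; rw [hX]; linear_combination h13 / 4
  have hstep : ∀ {x y}, (x, y) ∈ S → ∃ x' y', (x', y') ∈ S ∧ |x - X| ≤ |x' - X| / 9 := by
    intro x y hxy
    obtain ⟨n, hn1, hn2, x', rfl, hx'⟩ := hS.exists_eq_of_lt hxy (N := 3)
      (by norm_num; exact h4 _ _ hxy)
    have hx3 := h _ _ hx'
    refine ⟨_, _, hx', ?_⟩
    have hn : n = 3 := by
      refine le_antisymm hn2 ?_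
      by_contra! hc
      have h1 : (n : ℝ) ≤ 2 := by exact_mod_cast Nat.lt_succ_iff.1 hc
      have := one_div_le_one_div_of_le (by norm_num) hx3
      linarith [h _ _ hxy]
    subst hn
    have : ((3 : ℕ) : ℝ) + 1 / x' - X = (X - x') / (x' * X) := by
      conv_lhs => rw [hXX]
      push_cast
      field_simp
      ring
    rw [this, abs_div, abs_sub_comm, abs_of_pos (by positivity : 0 < x' * X)]
    exact div_le_div_of_nonneg_left (abs_nonneg _) (by norm_num) (by nlinarith)
  have hb : BddAbove ((fun z : ℝ × ℝ => |z.1 - X|) '' S) := by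
    refine ⟨4 + X, ?_⟩
    rintro _ ⟨⟨z, w⟩, hz, rfl⟩
    simp only
    rw [abs_le]
    constructor <;> linarith [h4 _ _ hz, h _ _ hz]
  have hx : ∀ {x y}, (x, y) ∈ S → x = X := by
    set s := sSup ((fun z : ℝ × ℝ => |z.1 - X|) '' S)
    have hs : s ≤ s / 9 := by
      refine csSup_le ⟨_, _, hxy, rfl⟩ ?_
      rintro _ ⟨⟨z, w⟩, hz, rfl⟩
      obtain ⟨x', y', hx', hle⟩ := hstep hz
      have : |x' - X| ≤ s := le_csSup hb ⟨_, hx', rfl⟩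
      simp only
      linarith
    intro x y hxy
    have : |x - X| ≤ s := le_csSup hb ⟨_, hxy, rfl⟩
    have : |x - X| = 0 := le_antisymm (by linarith) (abs_nonneg _)
    linarith [abs_eq_zero.1 this]
  have hy := hx (hS.swap hxy)
  have hy' : y = 1 / X := by rw [← hy, one_div_one_div]
  rw [hx hxy, hy', show 1 / X = X - 3 by linarith, hX]
  ring

theorem ge_three_of_lt (hS : IsReducedSystem S) {t : ℝ} (ht : t < (65 + 9 * √3) / 22)
    (hle : ∀ x y, (x, y) ∈ S → x + y ≤ t) (hxy : (x, y) ∈ S) (hx : 3 ≤ x) :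
    3 ≤ 1 / y ∧ ∃ x', x = 3 + 1 / x' ∧ 3 ≤ x' ∧ (x', 1 / (3 + y)) ∈ S := by
  have h3 : √3 ^ 2 = 3 := Real.sq_sqrt (by norm_num)
  have hlo : 1.732 < √3 := Real.lt_sqrt_of_sq_lt (by norm_num)
  have hhi : √3 < 1.7321 := by rw [Real.sqrt_lt' (by norm_num)]; norm_num
  have hx4 : ∀ {x y}, (x, y) ∈ S → x < 4 := fun hz => by linarith [hS.pos hz, hle _ _ hz]
  have hy4 : ∀ {x y}, (x, y) ∈ S → 1 / 4 < y := fun hz => by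
    have := hx4 (hS.swap hz)
    rw [div_lt_iff₀ (hS.pos hz)] at this
    linarith
  have digit : ∀ {x y}, (x, y) ∈ S → 3 ≤ x →
      ∃ x', x = 3 + 1 / x' ∧ (x', 1 / (3 + y)) ∈ S ∧ 1 < x' := by
    intro x y hz hz3
    obtain ⟨n, hn1, hn2, x', rfl, hx'⟩ := hS.exists_eq_of_lt hz (N := 3) (by norm_num; exact hx4 hz)
    have h1 := hS.one_lt hx'
    have hn : n = 3 := by
      refine le_antisymm hn2 ?_
      by_contra! hc
      have h2 : (n : ℝ) ≤ 2 := by exact_mod_cast Nat.lt_succ_iff.1 hc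
      have : 1 / x' < 1 := by rwa [div_lt_one (by linarith)]
      linarith
    subst hn
    push_cast at hx' ⊢
    exact ⟨x', rfl, hx', h1⟩
  have h1 : ∀ x y, (x, y) ∈ S → x < 2 → 4 / 3 < x := by
    intro x y hz hz2
    obtain ⟨n, hn1, hn2, x', rfl, hx'⟩ := hS.exists_eq_of_lt hz (N := 1) (by norm_num; exact hz2)
    obtain rfl : n = 1 := le_antisymm hn2 hn1
    push_cast at hx' ⊢
    have h1 := hS.one_lt hx'
    by_contra! hc
    have hx'3 : 3 ≤ x' := by
      by_contra! hlt
      have := one_div_lt_one_div_of_lt (by linarith) hlt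
      linarith
    obtain ⟨x'', rfl, hx'', -⟩ := digit hx' hx'3
    have h5 := one_div_lt_one_div_of_lt (by linarith [hS.pos hz]) (show 1 + y < 2 by
      linarith [hS.lt_one hz])
    have h6 := one_div_lt_one_div_of_lt (by linarith [hS.one_lt hx'']) (hx4 hx'')
    linarith [hle _ _ hx']
  have next : ∀ {x y}, (x, y) ∈ S → x < 3 → (√3 - 1) / 2 ≤ 1 / x := by
    intro x y hz hz3
    obtain ⟨n, hn1, hn2, x', rfl, hx'⟩ := hS.exists_eq_of_lt hz (N := 2) (by norm_num; exact hz3)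
    have hn : (n : ℝ) ≤ 2 := by exact_mod_cast hn2
    have := hS.one_div_le h1 hx'
    rw [le_div_iff₀ (by linarith [hS.one_lt hz])]
    nlinarith
  have key : ∀ {x y}, (x, y) ∈ S → 3 ≤ x → 3 ≤ 1 / y := by
    intro x y hz hz3
    by_contra! hy3
    have hu := next (hS.swap hz) hy3
    rw [one_div_one_div] at hu
    obtain ⟨x', rfl, hx', hx'1⟩ := digit hz hz3
    have hl := hle _ _ hz
    rcases lt_or_ge x' 3 with h | h
    · linarith [next hx' h]
    · obtain ⟨x'', rfl, hx'', -⟩ := digit hx' h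
      have hl' := hle _ _ hx'
      rcases lt_or_ge x'' 3 with h' | h'
      · have hv := next hx'' h'
        set v := 1 / x''
        clear_value v
        have e1 : 1 / (3 + v) * (3 + v) = 1 := one_div_mul_cancel (by linarith)
        have e2 : 1 / (3 + y) * (3 + y) = 1 := one_div_mul_cancel (by linarith)
        have hm : ∀ u : ℝ, (√3 - 1) / 2 ≤ u → (65 + 9 * √3) / 22 - 3 ≤ u + 1 / (3 + u) := by
          intro u hu
          rw [← sub_le_iff_le_add', le_div_iff₀ (by linarith)]
          nlinarith
        rcases le_total v y with hvy | hvy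
        · have := one_div_le_one_div_of_le (by linarith) (add_le_add_right hvy 3)
          linarith [hm y hu]
        · have := one_div_le_one_div_of_le (by linarith) (add_le_add_right hvy 3)
          linarith [hm v hv]
      · have h5 := one_div_le_one_div_of_le (by norm_num) h'
        have h6 := one_div_le_one_div_of_le (by linarith) (add_le_add_right h5 3)
        norm_num at h6
        norm_num at hl
        linarith
  obtain ⟨x', rfl, hx', hx'1⟩ := digit hxy hx
  refine ⟨key hxy hx, x', rfl, ?_, hx'⟩
  have := key (hS.flip hx') (by linarith [hS.pos hxy])
  rwa [one_div_one_div] at this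

end IsReducedSystem

/-- The reduced pairs whose form has the same Markov bounds as a given form bounded away from zero
form a reduced system. -/
theorem IsMarkovBound.isReducedSystem {a b c t : ℝ} (h : IsMarkovBound a b c t) :
    IsReducedSystem {z : ℝ × ℝ | 1 < z.1 ∧ 0 < z.2 ∧ z.2 < 1 ∧
      ∀ T, IsMarkovBound 1 (z.2 - z.1) (-(z.1 * z.2)) T ↔ IsMarkovBound a b c T} where
  one_lt h := h.1
  pos h := h.2.1
  swap := by
    rintro x y ⟨hx, hy, hy1, hT⟩
    refine ⟨?_, ?_, ?_, fun T => ?_⟩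
    · exact (one_lt_div hy).2 hy1
    · exact one_div_pos.2 (by linarith)
    · exact (div_lt_one (by linarith)).2 hx
    · exact (isMarkovBound_reduced_swap (by linarith) hy).trans (hT T)
  step := by
    rintro x y ⟨hx, hy, hy1, hT⟩
    simp only at hx hy hy1 hT
    have hn : 1 ≤ ⌊x⌋₊ := Nat.le_floor (by exact_mod_cast hx.le)
    have hn' : (1 : ℝ) ≤ ⌊x⌋₊ := by exact_mod_cast hn
    have hle := Nat.floor_le (by linarith : 0 ≤ x)
    have hlt := Nat.lt_floor_add_one x
    set n := ⌊x⌋₊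
    have hne : x ≠ n := by
      intro hxn
      have := ((hT t).2 h).ne_zero (by nlinarith) (p := n) (q := 1) (by simp)
      push_cast at this
      rw [← hxn] at this
      exact this (by ring)
    have hpos : 0 < x - n := sub_pos.2 (lt_of_le_of_ne hle hne.symm)
    have hxx : x = n + 1 / (1 / (x - n)) := by rw [one_div_one_div]; ring
    refine ⟨n, hn, 1 / (x - n), hxx, ?_, ?_, ?_, fun T => ?_⟩
    · exact (one_lt_div hpos).2 (by linarith)
    · exact one_div_pos.2 (by linarith)
    · exact (div_lt_one (by linarith)).2 (by linarith)
    · rw [← hT T]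
      have := isMarkovBound_reduced_step (T := T) (n := n) (x := 1 / (x - n)) (y := y)
        (by positivity) (by push_cast; linarith)
      push_cast at this
      rw [← hxx] at this
      exact this

theorem IsMarkovBound.sqrt_twelve_or_sqrt_thirteen {a b c t : ℝ} (h : IsMarkovBound a b c t)
    (hΔ : 0 < b ^ 2 - 4 * a * c) (ht : t < (65 + 9 * √3) / 22) :
    IsMarkovBound a b c √12 ∨ √13 ≤ t ∧ IsMarkovBound a b c √13 := by
  have h12 : 2 ≤ √12 := Real.le_sqrt_of_sq_le (by norm_num)
  have h13 : 2 ≤ √13 := Real.le_sqrt_of_sq_le (by norm_num)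
  obtain ⟨x₀, y₀, hx₀, hy₀, hy₀', hT⟩ := h.exists_reduced hΔ
  have hS := h.isReducedSystem
  have hmem : (x₀, y₀) ∈ {z : ℝ × ℝ | 1 < z.1 ∧ 0 < z.2 ∧ z.2 < 1 ∧
      ∀ T, IsMarkovBound 1 (z.2 - z.1) (-(z.1 * z.2)) T ↔ IsMarkovBound a b c T} :=
    ⟨hx₀, hy₀, hy₀', hT⟩
  have hequiv : ∀ x y, (x, y) ∈ {z : ℝ × ℝ | 1 < z.1 ∧ 0 < z.2 ∧ z.2 < 1 ∧
      ∀ T, IsMarkovBound 1 (z.2 - z.1) (-(z.1 * z.2)) T ↔ IsMarkovBound a b c T} →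
      ∀ T, IsMarkovBound 1 (y - x) (-(x * y)) T ↔ IsMarkovBound a b c T := fun x y hz => hz.2.2.2
  generalize {z : ℝ × ℝ | 1 < z.1 ∧ 0 < z.2 ∧ z.2 < 1 ∧
      ∀ T, IsMarkovBound 1 (z.2 - z.1) (-(z.1 * z.2)) T ↔ IsMarkovBound a b c T} = S at *
  have hle : ∀ x y, (x, y) ∈ S → x + y ≤ t := by
    intro x y hz
    have hpos : 0 < x + y := by linarith [hS.one_lt hz, hS.pos hz]
    have := (isMarkovBound_reduced_iff hpos).1 ((hequiv x y hz t).2 h) 1 0 (by simp)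
    rwa [Int.cast_one, Int.cast_zero, normVal_zero, one_pow, mul_one_div, one_le_div hpos] at this
  by_cases hx : ∀ x y, (x, y) ∈ S → x < 3
  · left
    rw [← hT]
    exact hS.isMarkovBound h12 (fun x y hz => hS.add_le_of_lt_three hx hz) hmem
  right
  push Not at hx
  obtain ⟨x₁, y₁, hz, hx₁⟩ := hx
  have hS' : IsReducedSystem {z : ℝ × ℝ | z ∈ S ∧ 3 ≤ z.1 ∧ 3 ≤ 1 / z.2} :=
    { one_lt := fun h => hS.one_lt h.1
      pos := fun h => hS.pos h.1
      swap := fun h => ⟨hS.swap h.1, h.2.2, by simpa using h.2.1⟩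
      step := by
        rintro x y ⟨hxy, hx3, hy3⟩
        obtain ⟨-, x', hx', hx'3, hmem'⟩ := hS.ge_three_of_lt ht hle hxy hx3
        refine ⟨3, by norm_num, x', by exact_mod_cast hx', by exact_mod_cast hmem', hx'3, ?_⟩
        rw [one_div_one_div]
        push_cast
        linarith [hS.pos hxy] }
  have hz' : (x₁, y₁) ∈ {z : ℝ × ℝ | z ∈ S ∧ 3 ≤ z.1 ∧ 3 ≤ 1 / z.2} :=
    ⟨hz, hx₁, (hS.ge_three_of_lt ht hle hz hx₁).1⟩
  have heq : ∀ x y, (x, y) ∈ {z : ℝ × ℝ | z ∈ S ∧ 3 ≤ z.1 ∧ 3 ≤ 1 / z.2} → x + y = √13 := by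
    refine fun x y => hS'.add_eq_sqrt_thirteen (fun _ _ h => h.2.1) fun x y hxy => ?_
    have hhi : √3 < 2 := by rw [Real.sqrt_lt' (by norm_num)]; norm_num
    linarith [hS.pos hxy.1, hle _ _ hxy.1]
  refine ⟨heq _ _ hz' ▸ hle _ _ hz, (hequiv _ _ hz _).1 ?_⟩
  exact hS'.isMarkovBound h13 (fun x y hxy => (heq x y hxy).le) hz'

theorem markovSpectrum_le_or_eq {t : ℝ} (hM : t ∈ MarkovSpectrum)
    (ht : t < (65 + 9 * √3) / 22) : t ≤ √12 ∨ t = √13 := by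
  obtain ⟨a, b, c, hΔ, hfin, rfl⟩ := hM
  have h := IsMarkovBound.toReal_markovVal hΔ hfin
  rcases h.sqrt_twelve_or_sqrt_thirteen hΔ ht with h' | ⟨h13, h'⟩
  · exact Or.inl (ENNReal.toReal_le_of_le_ofReal (Real.sqrt_nonneg _) (h'.markovVal_le hΔ))
  · exact Or.inr (le_antisymm
      (ENNReal.toReal_le_of_le_ofReal (Real.sqrt_nonneg _) (h'.markovVal_le hΔ)) h13)

/-! ### The Lagrange spectrum is contained in the Markov spectrum -/

theorem distNearestInt_le (x : ℝ) (p : ℤ) : distNearestInt x ≤ |x - p| := round_le x p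

theorem distNearestInt_pos {α : ℝ} (hα : Irrational α) {q : ℕ} (hq : 0 < q) :
    0 < distNearestInt (q * α) :=
  abs_pos.2 (sub_ne_zero.2 ((hα.natCast_mul hq.ne').ne_int _))

theorem exists_pos_le_abs_sub {α : ℝ} (hα : Irrational α) (K : ℕ) :
    ∃ c : ℝ, 0 < c ∧ ∀ P Q : ℤ, (P ≠ 0 ∨ Q ≠ 0) → |Q| ≤ K → c ≤ |Q * α - P| := by
  induction K with
  | zero =>
    refine ⟨1, one_pos, fun P Q hPQ hQ => ?_⟩
    obtain rfl : Q = 0 := by simpa using hQ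
    have : (1 : ℤ) ≤ |P| := Int.one_le_abs (by simpa using hPQ)
    simpa using (by exact_mod_cast this : (1 : ℝ) ≤ |(P : ℝ)|)
  | succ K ih =>
    obtain ⟨c, hc, h⟩ := ih
    refine ⟨min c (distNearestInt ((K + 1 : ℕ) * α)),
      lt_min hc (distNearestInt_pos hα K.succ_pos), fun P Q hPQ hQ => ?_⟩
    rcases hQ.lt_or_eq with hlt | heq
    · exact (min_le_left _ _).trans (h P Q hPQ (by push_cast at hlt; omega))
    · refine (min_le_right _ _).trans ?_
      rcases eq_or_eq_neg_of_abs_eq heq with rfl | rfl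
      · exact_mod_cast distNearestInt_le ((K + 1 : ℕ) * α) P
      · have := distNearestInt_le ((K + 1 : ℕ) * α) (-P)
        rw [← abs_neg] at this
        refine this.trans_eq (congrArg _ ?_)
        push_cast
        ring

theorem eventually_of_lagrangeVal_lt {α T : ℝ} (hα : Irrational α)
    (hT : lagrangeVal α < ENNReal.ofReal T) :
    ∀ᶠ q : ℕ in atTop, ∀ P : ℤ, 1 ≤ T * (q * |q * α - P|) := by
  have hT0 : 0 < T := ENNReal.ofReal_pos.1 (pos_of_gt hT)
  filter_upwards [eventually_lt_of_limsup_lt hT, eventually_gt_atTop 0] with q hq hq0 P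
  have hd := distNearestInt_pos hα hq0
  have hq0' : (0 : ℝ) < q := by exact_mod_cast hq0
  rw [ENNReal.ofReal_lt_ofReal_iff hT0, div_lt_iff₀ (by positivity)] at hq
  refine hq.le.trans ?_
  gcongr
  exact distNearestInt_le _ _

theorem exists_isCoprime_of_lt_lagrangeVal {α s : ℝ} (hα : Irrational α) (hs : 0 < s)
    (h : ENNReal.ofReal s < lagrangeVal α) (K : ℕ) :
    ∃ p q : ℤ, IsCoprime p q ∧ (K : ℤ) ≤ q ∧ s * |q * (q * α - p)| ≤ 1 := by
  obtain ⟨c, hc, hcK⟩ := exists_pos_le_abs_sub hα K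
  obtain ⟨q, hq, hq0, hqc⟩ := ((frequently_lt_of_lt_limsup (by isBoundedDefault) h).and_eventually
    ((eventually_gt_atTop 0).and (eventually_gt_atTop ⌈1 / (s * c)⌉₊))).exists
  have hd := distNearestInt_pos hα hq0
  have hq0' : (0 : ℝ) < q := by exact_mod_cast hq0
  have hq' : s * (q * distNearestInt (q * α)) < 1 := by
    have := (ENNReal.ofReal_lt_ofReal_iff_of_nonneg hs.le).1 hq
    rwa [lt_div_iff₀ (by positivity)] at this
  set p := round (q * α) with hp
  have hg : 0 < Int.gcd p q := Int.gcd_pos_of_ne_zero_right _ (by omega)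
  obtain ⟨p₀, q₀, hcop, hp₀, hq₀⟩ := Int.exists_gcd_one hg
  set g := Int.gcd p q
  have hg1 : (1 : ℝ) ≤ g := by exact_mod_cast hg
  have hp₀' : (p : ℝ) = p₀ * g := by exact_mod_cast congrArg (Int.cast : ℤ → ℝ) hp₀
  have hq₀' : (q : ℝ) = q₀ * g := by exact_mod_cast congrArg (Int.cast : ℤ → ℝ) hq₀
  have hq₀pos : 0 < q₀ := by
    by_contra! hle
    have : q₀ * (g : ℤ) ≤ 0 := mul_nonpos_of_nonpos_of_nonneg hle (by positivity)
    omega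
  have hq₀R : (0 : ℝ) < q₀ := by exact_mod_cast hq₀pos
  have hdist : distNearestInt (q * α) = g * |q₀ * α - p₀| := by
    rw [distNearestInt, ← hp, hp₀', hq₀', ← abs_of_pos (by linarith : (0 : ℝ) < g), ← abs_mul]
    simp only [abs_of_pos (by linarith : (0 : ℝ) < g)]
    ring_nf
  refine ⟨p₀, q₀, Int.isCoprime_iff_gcd_eq_one.2 hcop, ?_, ?_⟩
  · by_contra! hlt
    have h1 := hcK p₀ q₀ (Or.inr hq₀pos.ne') (by rw [abs_of_pos hq₀pos]; exact hlt.le)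
    have h2 : c ≤ distNearestInt (q * α) := by
      rw [hdist]
      nlinarith
    have h3 := Nat.lt_of_ceil_lt hqc
    rw [div_lt_iff₀ (by positivity)] at h3
    have h4 : s * (q * c) ≤ s * (q * distNearestInt (q * α)) := by gcongr
    linarith
  · rw [abs_mul, abs_of_pos hq₀R]
    refine le_trans ?_ hq'.le
    rw [hdist, hq₀']
    have : 0 ≤ q₀ * |(q₀ : ℝ) * α - p₀| := by positivity
    gcongr ?_ * ?_
    nlinarith [mul_le_mul_of_nonneg_right (one_le_mul_of_one_le_of_one_le hg1 hg1) this]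

theorem exists_complement {p q : ℤ} (h : IsCoprime p q) {α : ℝ}
    (h0 : (q : ℝ) * (q * α - p) ≠ 0) : ∃ r w : ℤ, p * w - q * r = 1 ∧
      |(q : ℝ) * (w * α - r) + w * (q * α - p)| ≤ |(q : ℝ) * (q * α - p)| := by
  obtain ⟨u, v, huv⟩ := h
  set A : ℝ := q * (q * α - p)
  set B : ℝ := q * (u * α + v) + u * (q * α - p)
  set k := round (-B / (2 * A)) with hk
  refine ⟨-v + k * p, u + k * q, by linear_combination huv, ?_⟩
  have hr := abs_sub_round (-B / (2 * A))
  rw [← hk] at hr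
  have e : (q : ℝ) * ((u + k * q : ℤ) * α - (-v + k * p : ℤ)) + (u + k * q : ℤ) * (q * α - p) =
      -(2 * A) * (-B / (2 * A) - k) := by
    have hdiv : 2 * A * (-B / (2 * A)) = -B := mul_div_cancel₀ _ (by simpa using h0)
    simp only [A, B] at hdiv ⊢
    push_cast
    linear_combination hdiv
  rw [e, abs_mul, abs_neg, abs_mul, abs_two]
  nlinarith [abs_nonneg A]

theorem mem_markovSpectrum_of_mem_lagrangeSpectrum {t : ℝ} (hL : t ∈ LagrangeSpectrum)
    (ht : 0 < t) : t ∈ MarkovSpectrum := by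
  obtain ⟨α, hα, hfin, hαt⟩ := hL
  have hval : lagrangeVal α = ENNReal.ofReal t := by rw [← hαt, ENNReal.ofReal_toReal hfin]
  have hupper : ∀ T, t < T → ∃ K : ℕ, ∀ P Q : ℤ, K ≤ |Q| → 1 ≤ T * |Q * (Q * α - P)| := by
    intro T hT
    obtain ⟨K, hK⟩ := eventually_atTop.1 (eventually_of_lagrangeVal_lt (T := T) hα
      (by rw [hval]; exact (ENNReal.ofReal_lt_ofReal_iff (by linarith)).2 hT))
    refine ⟨K, fun P Q hQ => ?_⟩
    rw [abs_mul]
    obtain ⟨m, rfl | rfl⟩ := Int.eq_nat_or_neg Q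
    · simpa using hK m (by simpa using hQ) P
    · refine (hK m (by simpa using hQ) (-P)).trans_eq ?_
      rw [← abs_neg ((m : ℝ) * α - _)]
      push_cast
      rw [abs_neg (m : ℝ), Nat.abs_cast]
      ring_nf
  let s : ℕ → ℝ := fun n => t * (n + 1) / (n + 2)
  have hs_pos : ∀ n, t / 2 ≤ s n := fun n => by
    simp only [s]
    rw [div_le_div_iff₀ (by norm_num) (by positivity)]
    nlinarith [(n.cast_nonneg : (0 : ℝ) ≤ n)]
  have hs_lt : ∀ n, s n < t := fun n => by
    simp only [s]
    rw [div_lt_iff₀ (by positivity)]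
    linarith
  have hs_lim : Tendsto s atTop (𝓝 t) := by
    have h1 : Tendsto (fun n : ℕ => t - t * (1 / ((n + 1 : ℕ) + 1 : ℝ))) atTop (𝓝 (t - t * 0)) :=
      ((tendsto_one_div_add_atTop_nhds_zero_nat.comp
        (tendsto_add_atTop_nat 1)).const_mul t).const_sub t
    rw [mul_zero, sub_zero] at h1
    refine h1.congr fun n => ?_
    simp only [s]
    push_cast
    field_simp
    ring
  have hpq : ∀ n : ℕ, ∃ p q r w : ℤ, p * w - q * r = 1 ∧ (n : ℤ) + 1 ≤ q ∧
      s n * |(q : ℝ) * (q * α - p)| ≤ 1 ∧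
      |(q : ℝ) * (w * α - r) + w * (q * α - p)| ≤ |(q : ℝ) * (q * α - p)| := by
    intro n
    obtain ⟨p, q, hcop, hq, hle⟩ := exists_isCoprime_of_lt_lagrangeVal (s := s n) hα
      (by linarith [hs_pos n])
      (by rw [hval]; exact (ENNReal.ofReal_lt_ofReal_iff ht).2 (hs_lt n)) (n + 1)
    have hq0 : q ≠ 0 := by push_cast at hq; omega
    obtain ⟨r, w, hdet, hB⟩ := exists_complement hcop (α := α)
      (mul_ne_zero (by exact_mod_cast hq0) (sub_ne_zero.2 ((hα.intCast_mul hq0).ne_int p)))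
    exact ⟨p, q, r, w, hdet, by exact_mod_cast hq, hle, hB⟩
  choose p q r w hdet hq hle hB using hpq
  let A : ℕ → ℝ := fun n => q n * (q n * α - p n)
  let B : ℕ → ℝ := fun n => q n * (w n * α - r n) + w n * (q n * α - p n)
  let C : ℕ → ℝ := fun n => w n * (w n * α - r n)
  have hdisc : ∀ n, B n ^ 2 - 4 * A n * C n = 1 := fun n => by
    have : (p n : ℝ) * w n - q n * r n = 1 := by exact_mod_cast hdet n
    simp only [A, B, C]
    linear_combination ((p n : ℝ) * w n - q n * r n + 1) * this
  have hA_le : ∀ n, |A n| ≤ 2 / t := fun n => by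
    rw [le_div_iff₀ ht]
    nlinarith [mul_le_mul_of_nonneg_right (hs_pos n) (abs_nonneg (A n)), hle n]
  have hq_ge : ∀ n : ℕ, (n : ℝ) + 1 ≤ q n := fun n => by exact_mod_cast hq n
  have hlow : ∀ T, t < T → ∀ X Y : ℤ, (X ≠ 0 ∨ Y ≠ 0) →
      ∀ᶠ n in atTop, 1 ≤ T * |A n * (X : ℝ) ^ 2 + B n * X * Y + C n * (Y : ℝ) ^ 2| := by
    intro T hT X Y hXY
    obtain ⟨K, hK⟩ := hupper T hT
    obtain ⟨c, hc, hcK⟩ := exists_pos_le_abs_sub hα K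
    filter_upwards [eventually_gt_atTop ⌈(K * (2 / t) + |(Y : ℝ)|) / c⌉₊] with n hn
    have hn' := Nat.lt_of_ceil_lt hn
    rw [div_lt_iff₀ hc] at hn'
    have hval : A n * (X : ℝ) ^ 2 + B n * X * Y + C n * (Y : ℝ) ^ 2 =
        ((q n * X + w n * Y : ℤ) : ℝ) *
          ((q n * X + w n * Y : ℤ) * α - (p n * X + r n * Y : ℤ)) := by
      simp only [A, B, C]
      push_cast
      ring
    rw [hval]
    set Q := q n * X + w n * Y with hQ
    set P := p n * X + r n * Y with hP
    refine hK P Q ?_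
    by_contra! hlt
    have hPQ : P ≠ 0 ∨ Q ≠ 0 := by
      by_contra! h0
      have h1 : X = 0 := by
        linear_combination w n * h0.1 - w n * hP - r n * h0.2 + r n * hQ - X * hdet n
      have h2 : Y = 0 := by
        linear_combination p n * h0.2 - p n * hQ - q n * h0.1 + q n * hP - Y * hdet n
      tauto
    have h1 := hcK P Q hPQ hlt.le
    have h2 : (q n : ℝ) * (Q * α - P) = Q * (q n * α - p n) + Y := by
      have hdet' : (p n : ℝ) * w n - q n * r n = 1 := by exact_mod_cast hdet n
      rw [hQ, hP]
      push_cast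
      linear_combination (Y : ℝ) * hdet'
    have hqpos : (0 : ℝ) < q n := by linarith [hq_ge n, (n.cast_nonneg : (0 : ℝ) ≤ n)]
    have h3 : |(q n : ℝ) * α - p n| ≤ 2 / t := by
      refine le_trans ?_ (hA_le n)
      simp only [A]
      rw [abs_mul, abs_of_pos hqpos]
      exact le_mul_of_one_le_left (abs_nonneg _)
        (by linarith [hq_ge n, (n.cast_nonneg : (0 : ℝ) ≤ n)])
    have h4 : q n * |Q * α - P| ≤ K * (2 / t) + |(Y : ℝ)| := by
      have h : (q n : ℝ) * |Q * α - P| = |(q n : ℝ) * (Q * α - P)| := by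
        rw [abs_mul, abs_of_pos hqpos]
      rw [h, h2]
      refine (abs_add_le _ _).trans ?_
      rw [abs_mul]
      have : |(Q : ℝ)| ≤ K := by exact_mod_cast hlt.le
      gcongr
    have h5 : (n : ℝ) * c ≤ q n * |Q * α - P| := by
      gcongr
      linarith [hq_ge n]
    linarith
  have hbounded : ∃ᶠ n in atTop, (A n, B n, C n) ∈ Set.Icc (-(2 / t)) (2 / t) ×ˢ
      Set.Icc (-(2 / t)) (2 / t) ×ˢ
      Set.Icc (-(((2 / t) ^ 2 + 1) * (t + 1))) (((2 / t) ^ 2 + 1) * (t + 1)) := by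
    refine Eventually.frequently ?_
    filter_upwards [hlow (t + 1) (by linarith) 1 0 (by simp)] with n hn
    simp only [Int.cast_one, Int.cast_zero, one_pow, mul_one, mul_zero, add_zero, ne_eq,
      OfNat.ofNat_ne_zero, not_false_eq_true, zero_pow] at hn
    have hBn : |B n| ≤ 2 / t := (hB n).trans (hA_le n)
    refine ⟨abs_le.1 (hA_le n), abs_le.1 hBn, abs_le.1 ?_⟩
    have h1 : 4 * (|A n| * |C n|) ≤ (2 / t) ^ 2 + 1 := by
      have : 4 * (|A n| * |C n|) = |B n ^ 2 - 1| := by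
        rw [← abs_mul, show B n ^ 2 - 1 = 4 * (A n * C n) by linarith [hdisc n],
          abs_mul 4, abs_of_pos (by norm_num : (0 : ℝ) < 4)]
      rw [this]
      have h2 : B n ^ 2 ≤ (2 / t) ^ 2 := sq_le_sq' (abs_le.1 hBn).1 (abs_le.1 hBn).2
      rw [abs_le]
      constructor <;> nlinarith [sq_nonneg (B n)]
    have h2 : |C n| ≤ (t + 1) * (|A n| * |C n|) := by
      nlinarith [mul_le_mul_of_nonneg_right hn (abs_nonneg (C n))]
    have h3 : 0 ≤ |A n| * |C n| := by positivity
    nlinarith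
  obtain ⟨⟨A', B', C'⟩, -, φ, hφ, hlim⟩ := tendsto_subseq_of_frequently_bounded
    ((Metric.isBounded_Icc _ _).prod ((Metric.isBounded_Icc _ _).prod (Metric.isBounded_Icc _ _)))
    hbounded
  have hA : Tendsto (fun n => A (φ n)) atTop (𝓝 A') := hlim.fst_nhds
  have hB' : Tendsto (fun n => B (φ n)) atTop (𝓝 B') := hlim.snd_nhds.fst_nhds
  have hC : Tendsto (fun n => C (φ n)) atTop (𝓝 C') := hlim.snd_nhds.snd_nhds
  have hΔ : B' ^ 2 - 4 * A' * C' = 1 := by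
    refine tendsto_nhds_unique ((hB'.pow 2).sub ((hA.const_mul 4).mul hC)) ?_
    simp only [hdisc]
    exact tendsto_const_nhds
  have hA' : t * |A'| ≤ 1 :=
    le_of_tendsto' ((hs_lim.comp hφ.tendsto_atTop).mul hA.abs) fun n => hle (φ n)
  have hbd : IsMarkovBound A' B' C' t := by
    intro X Y hXY
    rw [hΔ, Real.sqrt_one]
    have hT : ∀ T, t < T → 1 ≤ T * |A' * (X : ℝ) ^ 2 + B' * X * Y + C' * (Y : ℝ) ^ 2| := by
      intro T hT
      refine ge_of_tendsto ((((hA.mul_const _).add ((hB'.mul_const _).mul_const _)).add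
        (hC.mul_const _)).abs.const_mul T) (hφ.tendsto_atTop.eventually (hlow T hT X Y hXY))
    exact ge_of_tendsto ((tendsto_id.mul_const _).mono_left (nhdsWithin_le_nhds (s := Set.Ioi t)))
      (eventually_nhdsWithin_of_forall hT)
  have hpos : 0 < B' ^ 2 - 4 * A' * C' := by rw [hΔ]; exact one_pos
  have hmle := hbd.markovVal_le hpos
  have hne : markovVal A' B' C' ≠ ⊤ := ne_top_of_le_ne_top ENNReal.ofReal_ne_top hmle
  refine ⟨A', B', C', hpos, hne, le_antisymm (ENNReal.toReal_le_of_le_ofReal ht.le hmle) ?_⟩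
  have h1 := IsMarkovBound.toReal_markovVal hpos hne 1 0 (by simp)
  simp only [hΔ, Int.cast_one, Int.cast_zero, one_pow, mul_one, mul_zero, add_zero, ne_eq,
    OfNat.ofNat_ne_zero, not_false_eq_true, zero_pow, Real.sqrt_one] at h1
  have hA0 : 0 < |A'| := abs_pos.2 (by rintro rfl; simp at h1; linarith)
  exact le_of_mul_le_mul_right (hA'.trans h1) hA0

/-! ### Lagrange values from one-sided continued fractions -/

/-- The complete quotients `x` of a continued fraction with partial quotients `a`, together with
the backward continued fractions `y`. -/
structure IsQuotientChain (a : ℕ → ℤ) (x y : ℕ → ℝ) : Prop where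
  one_le : ∀ n, 1 ≤ a n
  one_lt : ∀ n, 1 < x n
  eq_add : ∀ n, x n = a n + 1 / x (n + 1)
  nonneg : ∀ n, 0 ≤ y n
  succ_eq : ∀ n, y (n + 1) = 1 / (a n + y n)

/-- The pair of integers that `n` steps of the Euclidean algorithm with quotients `a` reduce
to `(p, q)`. -/
def euclidLift (a : ℕ → ℤ) : ℕ → ℤ → ℤ → ℤ × ℤ
  | 0, p, q => (p, q)
  | n + 1, p, q => euclidLift a n (a n * p + q) p

theorem natCast_add_le_euclidLift_fst {a : ℕ → ℤ} (ha : ∀ n, 1 ≤ a n) (n : ℕ) {p q : ℤ}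
    (hp : 1 ≤ p) (hq : 1 ≤ q) : n + p ≤ (euclidLift a n p q).1 := by
  induction n generalizing p q with
  | zero => simp [euclidLift]
  | succ n ih =>
    have h : p + 1 ≤ a n * p + q := by nlinarith [ha n]
    have := ih (p := a n * p + q) (q := p) (by omega) hp
    rw [euclidLift]
    push_cast
    omega

theorem natCast_le_euclidLift_one_zero_fst {a : ℕ → ℤ} (ha : ∀ n, 1 ≤ a n) (n : ℕ) :
    (n : ℤ) ≤ (euclidLift a n 1 0).1 := by
  cases n with
  | zero => simp [euclidLift]
  | succ n =>
    have := natCast_add_le_euclidLift_fst ha n (p := a n * 1 + 0) (q := 1)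
      (by linarith [ha n]) le_rfl
    rw [euclidLift]
    push_cast
    linarith [ha n]

namespace IsQuotientChain

variable {a : ℕ → ℤ} {x y : ℕ → ℝ}

theorem one_lt_add (h : IsQuotientChain a x y) (n : ℕ) : 1 < x n + y n := by
  linarith [h.one_lt n, h.nonneg n]

theorem normVal_succ (h : IsQuotientChain a x y) (n : ℕ) (p q : ℝ) :
    normVal (x n) (y n) p q = normVal (x (n + 1)) (y (n + 1)) q (p - a n * q) := by
  have h1 : (1 : ℝ) ≤ a n := by exact_mod_cast h.one_le n
  rw [h.succ_eq, ← normVal_step (by linarith [h.one_lt (n + 1)]) (by linarith [h.nonneg n]),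
    ← h.eq_add]

theorem normVal_euclidLift (h : IsQuotientChain a x y) (n : ℕ) (p q : ℤ) :
    normVal (x 0) (y 0) (euclidLift a n p q).1 (euclidLift a n p q).2 =
      normVal (x n) (y n) p q := by
  induction n generalizing p q with
  | zero => rfl
  | succ n ih =>
    rw [euclidLift, ih, h.normVal_succ]
    congr 1
    push_cast
    ring

theorem half_le_normVal_or (h : IsQuotientChain a x y) (m : ℕ) :
    ∀ (i : ℕ) (p q : ℤ), 0 < p → 0 ≤ q → p + q ≤ m →
    1 / 2 ≤ normVal (x i) (y i) p q ∨ ∃ (n : ℕ) (k : ℤ), 1 ≤ k ∧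
      normVal (x i) (y i) p q = (k : ℝ) ^ 2 / (x n + y n) ∧
      euclidLift a i p q = euclidLift a n k 0 := by
  induction m with
  | zero => intro i p q hp hq hm; push_cast at hm; omega
  | succ m ih =>
    intro i p q hp hq hm
    push_cast at hm
    rcases hq.eq_or_lt with rfl | hq
    · exact Or.inr ⟨i, p, hp, by rw [Int.cast_zero, normVal_zero], rfl⟩
    · have ha := h.one_le i
      rcases lt_or_ge (p - a i * q) 0 with hneg | hge
      · left
        rw [h.eq_add]
        exact half_le_normVal (by linarith [h.one_lt (i + 1)]) (h.nonneg i) hp hq hneg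
      · have := ih (i + 1) q (p - a i * q) hq hge (by nlinarith)
        rw [euclidLift, show a i * q + (p - a i * q) = p by ring] at this
        rw [h.normVal_succ]
        exact_mod_cast this

theorem mul_abs_sub (h : IsQuotientChain a x y) (h0 : y 0 = 0) {p : ℝ} (hp : 0 < p) (q : ℝ) :
    p * |p * (1 / x 0) - q| = normVal (x 0) (y 0) p q := by
  have hx : 0 < x 0 := by linarith [h.one_lt 0]
  rw [normVal, h0, mul_zero, add_zero, add_zero, abs_mul, abs_of_pos hp,
    show p - q * x 0 = x 0 * (p * (1 / x 0) - q) by field_simp, abs_mul, abs_of_pos hx]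
  field_simp

theorem mem_lagrangeSpectrum (h : IsQuotientChain a x y) (h0 : y 0 = 0) {t : ℝ} (ht : 2 ≤ t)
    (hle : ∀ n, x n + y n ≤ 4 * t) (hev : ∀ ε > 0, ∀ᶠ n in atTop, x n + y n ≤ t + ε)
    (hfr : ∀ ε > 0, ∃ᶠ n in atTop, t - ε ≤ x n + y n) : t ∈ LagrangeSpectrum := by
  set α := 1 / x 0 with hα
  have hα0 : 0 < α := by rw [hα]; have := h.one_lt 0; positivity
  have hupper : ∀ ε > 0, ∀ᶠ q : ℕ in atTop, 1 ≤ (t + ε) * (q * distNearestInt (q * α)) := by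
    intro ε hε
    obtain ⟨N, hN⟩ := eventually_atTop.1 (hev ε hε)
    have hlarge : ∀ᶠ q : ℕ in atTop, ∀ n ∈ Finset.range N, (euclidLift a n 1 0).1 < q := by
      rw [Filter.eventually_all_finset]
      intro n _
      filter_upwards [eventually_gt_atTop (euclidLift a n 1 0).1.toNat] with q hq
      omega
    filter_upwards [hlarge, eventually_gt_atTop 0] with q hq hq0
    have hq0' : (0 : ℝ) < q := by exact_mod_cast hq0
    have hp : 0 ≤ round (q * α) := by
      rw [round_eq]
      positivity
    rw [distNearestInt, h.mul_abs_sub h0 hq0']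
    have := h.half_le_normVal_or (q + round (q * α)).toNat 0 q (round (q * α))
      (by exact_mod_cast hq0) hp (Int.self_le_toNat _)
    rw [Int.cast_natCast] at this
    obtain hhalf | ⟨n, k, hk, hval, hlift⟩ := this
    · nlinarith
    · have hpos := h.one_lt_add n
      rw [hval, ← mul_div_assoc, le_div_iff₀ (by linarith), one_mul]
      rcases hk.eq_or_lt with rfl | hk
      · have hn : N ≤ n := by
          by_contra! hlt
          have h1 := hq n (Finset.mem_range.2 hlt)
          rw [← hlift] at h1
          simp [euclidLift] at h1
        simpa using hN n hn
      · have hk' : (2 : ℝ) ≤ k := by exact_mod_cast hk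
        have hk2 : (4 : ℝ) ≤ (k : ℝ) ^ 2 := by nlinarith
        nlinarith [hle n]
  have hirr : Irrational α := by
    rintro ⟨r, hr⟩
    obtain ⟨K, hK⟩ := eventually_atTop.1 (hupper 1 one_pos)
    have h1 := hK ((K + 1) * r.den) (by nlinarith [r.den_pos])
    have h2 : (((K + 1) * r.den : ℕ) : ℝ) * α = (((K + 1) * r.num : ℤ) : ℝ) := by
      have : (r.den : ℝ) * r = r.num := by exact_mod_cast Rat.den_mul_eq_num r
      rw [← hr]
      push_cast
      linear_combination ((K : ℝ) + 1) * this
    rw [h2, distNearestInt, round_intCast, sub_self, abs_zero, mul_zero, mul_zero] at h1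
    linarith
  have hle' : ∀ ε > 0, lagrangeVal α ≤ ENNReal.ofReal (t + ε) := by
    intro ε hε
    refine limsup_le_of_le (by isBoundedDefault) ?_
    filter_upwards [hupper ε hε, eventually_gt_atTop 0] with q hq hq0
    have hd := distNearestInt_pos hirr hq0
    have hq0' : (0 : ℝ) < q := by exact_mod_cast hq0
    exact ENNReal.ofReal_le_ofReal ((div_le_iff₀ (by positivity)).2 hq)
  have hge' : ∀ ε > 0, ENNReal.ofReal (t - ε) ≤ lagrangeVal α := by
    intro ε hε
    refine le_limsup_of_frequently_le ?_ (by isBoundedDefault)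
    rw [Filter.frequently_atTop]
    intro K
    obtain ⟨n, hn, hnK⟩ := ((hfr ε hε).and_eventually (eventually_gt_atTop K)).exists
    have hgrow := natCast_le_euclidLift_one_zero_fst h.one_le n
    have hval := h.normVal_euclidLift n 1 0
    obtain ⟨Q, hQ⟩ := Int.eq_ofNat_of_zero_le ((Int.natCast_nonneg n).trans hgrow)
    have hQ0 : 0 < Q := by omega
    refine ⟨Q, by omega, ENNReal.ofReal_le_ofReal ?_⟩
    have hd := distNearestInt_pos hirr hQ0
    have hQ0' : (0 : ℝ) < Q := by exact_mod_cast hQ0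
    have hpos := h.one_lt_add n
    rw [hQ, Int.cast_natCast, ← h.mul_abs_sub h0 hQ0', Int.cast_zero, normVal_zero, Int.cast_one,
      one_pow] at hval
    refine hn.trans ?_
    rw [le_div_iff₀ (by positivity), ← le_div_iff₀' (by linarith), ← hval]
    gcongr
    exact distNearestInt_le _ _
  have hne : lagrangeVal α ≠ ⊤ := ne_top_of_le_ne_top ENNReal.ofReal_ne_top (hle' 1 one_pos)
  refine ⟨α, hirr, hne, le_antisymm (le_of_forall_pos_le_add fun ε hε => ?_)
    (le_of_forall_pos_le_add fun ε hε => ?_)⟩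
  · exact ENNReal.toReal_le_of_le_ofReal (by linarith) (hle' ε hε)
  · have := (ENNReal.ofReal_le_iff_le_toReal hne).1 (hge' ε hε)
    linarith

end IsQuotientChain

/-! ### Three elements of the Lagrange spectrum -/

theorem exists_quotients {a : ℕ → ℤ} (h1 : ∀ n, 1 ≤ a n) (h3 : ∀ n, a n ≤ 3) :
    ∃ x : ℕ → ℝ, (∀ n, x n ∈ Set.Icc (1 : ℝ) 4) ∧ ∀ n, x n = a n + 1 / x (n + 1) := by
  let C : ℕ → Set (ℕ → ℝ) := fun k => (Set.univ.pi fun _ => Set.Icc (1 : ℝ) 4) ∩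
    {x | ∀ i < k, (x i - a i) * x (i + 1) = 1}
  have hcompact : IsCompact (Set.univ.pi fun _ : ℕ => Set.Icc (1 : ℝ) 4) :=
    isCompact_univ_pi fun _ => isCompact_Icc
  have hclosed : ∀ k, IsClosed {x : ℕ → ℝ | ∀ i < k, (x i - a i) * x (i + 1) = 1} := by
    intro k
    simp only [Set.ofPred_forall]
    exact isClosed_biInter fun i _ => isClosed_eq (by fun_prop) continuous_const
  have hnonempty : ∀ (k : ℕ) (a : ℕ → ℤ), (∀ n, 1 ≤ a n) → (∀ n, a n ≤ 3) →
      ∃ x : ℕ → ℝ, (∀ n, x n ∈ Set.Icc (1 : ℝ) 4) ∧ ∀ i < k, (x i - a i) * x (i + 1) = 1 := by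
    intro k
    induction k with
    | zero => exact fun _ _ _ => ⟨fun _ => 1, fun _ => by norm_num, by simp⟩
    | succ k ih =>
      intro a h1 h3
      obtain ⟨x, hx, hrel⟩ := ih (fun n => a (n + 1)) (fun n => h1 _) (fun n => h3 _)
      have h1' : (1 : ℝ) ≤ a 0 := by exact_mod_cast h1 0
      have h3' : (a 0 : ℝ) ≤ 3 := by exact_mod_cast h3 0
      have hx0 : 1 / x 0 ≤ 1 := (div_le_one (by linarith [(hx 0).1])).2 (hx 0).1
      have hx0' : 0 < x 0 := by linarith [(hx 0).1]
      have hx1 : 0 < 1 / x 0 := by positivity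
      refine ⟨fun n => Nat.casesOn n (a 0 + 1 / x 0) x, fun n => ?_, fun i hi => ?_⟩
      · cases n with
        | zero =>
          change a 0 + 1 / x 0 ∈ Set.Icc (1 : ℝ) 4
          exact ⟨by linarith, by linarith⟩
        | succ n => exact hx n
      · cases i with
        | zero =>
          change (a 0 + 1 / x 0 - a 0) * x 0 = 1
          field_simp
          ring
        | succ i => exact hrel i (by omega)
  obtain ⟨x, hx⟩ := IsCompact.nonempty_iInter_of_sequence_nonempty_isCompact_isClosed C
    (fun k x hx => ⟨hx.1, fun i hi => hx.2 i (by omega)⟩)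
    (fun k => by
      obtain ⟨x, hx, hrel⟩ := hnonempty k a h1 h3
      exact ⟨x, fun n _ => hx n, hrel⟩)
    (hcompact.inter_right (hclosed 0)) (fun k => hcompact.isClosed.inter (hclosed k))
  rw [Set.mem_iInter] at hx
  have hmem : ∀ n, x n ∈ Set.Icc (1 : ℝ) 4 := fun n => (hx 0).1 n trivial
  refine ⟨x, hmem, fun n => ?_⟩
  have h0 : x (n + 1) ≠ 0 := by linarith [(hmem (n + 1)).1]
  have := (hx (n + 1)).2 n (by omega)
  rw [← sub_eq_iff_eq_add', eq_div_iff h0, this]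

/-- The backward continued fractions `[0; a (n - 1), …, a 0]`. -/
noncomputable def backwardQuotient (a : ℕ → ℤ) : ℕ → ℝ
  | 0 => 0
  | n + 1 => 1 / (a n + backwardQuotient a n)

theorem backwardQuotient_mem_Icc {a : ℕ → ℤ} (h1 : ∀ n, 1 ≤ a n) (n : ℕ) :
    backwardQuotient a n ∈ Set.Icc (0 : ℝ) 1 := by
  induction n with
  | zero => simp [backwardQuotient]
  | succ n ih =>
    have h : (1 : ℝ) ≤ a n := by exact_mod_cast h1 n
    rw [backwardQuotient]
    exact ⟨div_nonneg zero_le_one (by linarith [ih.1]),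
      (div_le_one (by linarith [ih.1])).2 (by linarith [ih.1])⟩

theorem isQuotientChain_backwardQuotient {a : ℕ → ℤ} {x : ℕ → ℝ} (h1 : ∀ n, 1 ≤ a n)
    (hx : ∀ n, 0 < x n) (heq : ∀ n, x n = a n + 1 / x (n + 1)) :
    IsQuotientChain a x (backwardQuotient a) where
  one_le := h1
  one_lt n := by
    have h : (1 : ℝ) ≤ a n := by exact_mod_cast h1 n
    have := one_div_pos.2 (hx (n + 1))
    rw [heq]
    linarith
  eq_add := heq
  nonneg n := (backwardQuotient_mem_Icc h1 n).1
  succ_eq _ := rfl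

theorem abs_sub_le_pow_of_forward {w : ℕ → ℝ} {g : ℝ} {k : ℕ} (h0 : |w 0 - g| ≤ 1)
    (h : ∀ i < k, |w (i + 1) - g| ≤ |w i - g| / 9) : |w k - g| ≤ (1 / 9) ^ k := by
  induction k with
  | zero => simpa using h0
  | succ k ih =>
    have := h k k.lt_succ_self
    have := ih fun i hi => h i (by omega)
    rw [pow_succ]
    linarith

theorem abs_sub_le_pow_of_backward {w : ℕ → ℝ} {g : ℝ} {k : ℕ} (h0 : |w k - g| ≤ 1)
    (h : ∀ i < k, |w i - g| ≤ |w (i + 1) - g| / 9) : |w 0 - g| ≤ (1 / 9) ^ k := by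
  have := abs_sub_le_pow_of_forward (w := fun i => w (k - i)) (g := g) (k := k) (by simpa using h0)
    fun i hi => by
      have := h (k - (i + 1)) (by omega)
      rwa [show k - (i + 1) + 1 = k - i by omega] at this
  simpa using this

theorem tendsto_of_abs_sub_le_pow {w : ℕ → ℝ} {g : ℝ} (h : ∀ k, |w k - g| ≤ (1 / 9) ^ k) :
    Tendsto w atTop (𝓝 g) :=
  tendsto_iff_norm_sub_tendsto_zero.2 (squeeze_zero (fun _ => norm_nonneg _) h
    (tendsto_pow_atTop_nhds_zero_of_lt_one (by norm_num) (by norm_num)))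

theorem sqrt_three_mem : √3 ∈ Set.Ioo (1.732 : ℝ) 1.733 :=
  ⟨Real.lt_sqrt_of_sq_lt (by norm_num), (Real.sqrt_lt' (by norm_num)).2 (by norm_num)⟩

theorem sqrt_thirteen_mem : √13 ∈ Set.Ioo (3.6 : ℝ) 3.61 :=
  ⟨Real.lt_sqrt_of_sq_lt (by norm_num), (Real.sqrt_lt' (by norm_num)).2 (by norm_num)⟩

theorem abs_one_two_sub_le {w : ℝ} (hw : 0 ≤ w) :
    |1 / (1 + 1 / (2 + w)) - (√3 - 1)| ≤ |w - (√3 - 1)| / 9 := by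
  obtain ⟨hl, hu⟩ := sqrt_three_mem
  have h3 : √3 * √3 = 3 := Real.mul_self_sqrt (by norm_num)
  have e : 1 / (1 + 1 / (2 + w)) - (√3 - 1) = (w - (√3 - 1)) / ((3 + w) * (2 + √3)) := by
    have h2 : 2 + w ≠ 0 := by positivity
    have h : 2 + w + 1 ≠ 0 := by positivity
    have h' : 3 + w ≠ 0 := by positivity
    have h'' : 2 + √3 ≠ 0 := by positivity
    rw [one_add_div h2, one_div_div, div_sub' h, div_eq_div_iff h (by positivity)]
    linear_combination (-(3 + w) ^ 2) * h3
  rw [e, abs_div, abs_of_pos (by positivity : 0 < (3 + w) * (2 + √3))]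
  exact div_le_div_of_nonneg_left (abs_nonneg _) (by norm_num) (by nlinarith)

theorem abs_three_sub_le {w : ℝ} (hw : 0 ≤ w) :
    |1 / (3 + w) - (√13 - 3) / 2| ≤ |w - (√13 - 3) / 2| / 9 := by
  obtain ⟨hl, hu⟩ := sqrt_thirteen_mem
  have h13 : √13 * √13 = 13 := Real.mul_self_sqrt (by norm_num)
  have e : 1 / (3 + w) - (√13 - 3) / 2 =
      -(w - (√13 - 3) / 2) / ((3 + w) * ((3 + √13) / 2)) := by
    field_simp
    linear_combination (-(3 + w)) * h13
  rw [e, abs_div, abs_neg, abs_of_pos (by positivity : 0 < (3 + w) * ((3 + √13) / 2))]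
  exact div_le_div_of_nonneg_left (abs_nonneg _) (by norm_num) (by nlinarith)

theorem sqrt_thirteen_mem_lagrangeSpectrum : √13 ∈ LagrangeSpectrum := by
  obtain ⟨hl, hu⟩ := sqrt_thirteen_mem
  have h13 : √13 * √13 = 13 := Real.mul_self_sqrt (by norm_num)
  have ha : ∀ n : ℕ, 1 ≤ (fun _ : ℕ => (3 : ℤ)) n := fun _ => by norm_num
  have h := isQuotientChain_backwardQuotient (x := fun _ => (3 + √13) / 2) ha
    (fun _ => by positivity) (fun _ => by
      push_cast
      field_simp
      linear_combination h13)
  set y := backwardQuotient fun _ => 3 with hy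
  have hy1 : ∀ n, y n ≤ 1 := fun n => (backwardQuotient_mem_Icc ha n).2
  have hlim : Tendsto (fun n => (3 + √13) / 2 + y n) atTop (𝓝 √13) := by
    have : Tendsto y atTop (𝓝 ((√13 - 3) / 2)) := by
      refine tendsto_of_abs_sub_le_pow fun k => abs_sub_le_pow_of_forward ?_ fun i _ => ?_
      · rw [hy, backwardQuotient, abs_le]
        constructor <;> linarith
      · rw [h.succ_eq]
        exact_mod_cast abs_three_sub_le (h.nonneg i)
    convert this.const_add ((3 + √13) / 2) using 2
    ring
  refine h.mem_lagrangeSpectrum rfl (by linarith) (fun n => by linarith [hy1 n])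
    (fun ε hε => ?_) (fun ε hε => ?_)
  · exact hlim.eventually_le_const (by linarith)
  · exact (hlim.eventually_const_le (by linarith)).frequently

theorem sqrt_twelve_mem_lagrangeSpectrum : √12 ∈ LagrangeSpectrum := by
  obtain ⟨hl, hu⟩ := sqrt_three_mem
  have h3 : √3 * √3 = 3 := Real.mul_self_sqrt (by norm_num)
  let a : ℕ → ℤ := fun n => if Even n then 2 else 1
  let x : ℕ → ℝ := fun n => if Even n then 1 + √3 else (1 + √3) / 2
  have ha : ∀ n, 1 ≤ a n := fun n => by simp only [a]; split_ifs <;> norm_num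
  have h : IsQuotientChain a x (backwardQuotient a) := by
    refine isQuotientChain_backwardQuotient ha (fun n => ?_) (fun n => ?_)
    · simp only [x]
      split_ifs <;> positivity
    · simp only [a, x, Nat.even_add_one]
      by_cases hn : Even n <;> simp only [hn, not_true, not_false_eq_true, if_true, if_false] <;>
        push_cast <;> field_simp <;> linear_combination h3
  set y := backwardQuotient a with hy
  have hy1 : ∀ n, y n ≤ 1 := fun n => (backwardQuotient_mem_Icc ha n).2
  have hodd : ∀ n, ¬ Even n → x n + y n ≤ √12 := fun n hn => by
    simp only [x, hn, if_false]
    linarith [hy1 n, sqrt_twelve]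
  have hlim : Tendsto (fun k => x (2 * k) + y (2 * k)) atTop (𝓝 √12) := by
    have : Tendsto (fun k => y (2 * k)) atTop (𝓝 (√3 - 1)) := by
      refine tendsto_of_abs_sub_le_pow fun k =>
        abs_sub_le_pow_of_forward (w := fun k => y (2 * k)) ?_ fun i _ => ?_
      · simp only [hy, mul_zero, backwardQuotient]
        rw [abs_le]
        constructor <;> linarith
      · have := abs_one_two_sub_le (h.nonneg (2 * i))
        simp only [show 2 * (i + 1) = 2 * i + 1 + 1 by ring, h.succ_eq]
        simpa [a, Nat.even_add_one] using this
    convert this.const_add (1 + √3) using 2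
    · simp [x]
    · rw [sqrt_twelve]
      ring
  refine h.mem_lagrangeSpectrum rfl (by linarith [sqrt_twelve]) (fun n => ?_)
    (fun ε hε => ?_) (fun ε hε => ?_)
  · by_cases hn : Even n
    · simp only [x, hn, if_true]
      linarith [hy1 n, sqrt_twelve]
    · linarith [hodd n hn, sqrt_twelve]
  · obtain ⟨K, hK⟩ := eventually_atTop.1
      (hlim.eventually_le_const (show √12 < √12 + ε by linarith))
    filter_upwards [eventually_ge_atTop (2 * K)] with n hn
    rcases n.even_or_odd' with ⟨k, rfl | rfl⟩
    · exact hK k (by omega)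
    · linarith [hodd (2 * k + 1) (by simp)]
  · exact (tendsto_id.const_mul_atTop' two_pos).frequently
      (hlim.eventually_const_le (by linarith)).frequently

/-- Blocks of partial quotients `3, 3, 2, 1, 2, 1, …, 2` of lengths `1, 3, 5, …`. -/
def perronDigit (n : ℕ) : ℤ :=
  let j := n - Nat.sqrt n * Nat.sqrt n
  if j ≤ 1 then 3 else if Even j then 2 else 1

theorem perronDigit_mul_self_add {k j : ℕ} (hj : j ≤ k + k) :
    perronDigit (k * k + j) = if j ≤ 1 then 3 else if Even j then 2 else 1 := by
  rw [perronDigit, Nat.sqrt_add_eq k hj, Nat.add_sub_cancel_left]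

theorem perronDigit_of_lt {k i : ℕ} (hi : i < k) :
    perronDigit (k * k + (2 + 2 * i)) = 2 := by
  rw [perronDigit_mul_self_add (by omega), if_neg (by omega),
    if_pos ((even_two).add (even_two_mul i))]

theorem perronDigit_of_add_one_lt {k i : ℕ} (hi : i + 1 < k) :
    perronDigit (k * k + (2 + 2 * i) + 1) = 1 := by
  rw [add_assoc, perronDigit_mul_self_add (by omega), if_neg (by omega),
    if_neg (Nat.not_even_iff_odd.2 ((even_two).add (even_two_mul i)).add_one)]

theorem perronDigit_mem (n : ℕ) : perronDigit n ∈ Set.Icc (1 : ℤ) 3 := by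
  rw [perronDigit]
  split_ifs <;> norm_num

namespace IsQuotientChain

variable {x y : ℕ → ℝ}

theorem tendsto_backward_perronDigit (h : IsQuotientChain perronDigit x y)
    (hy : ∀ n, y n ≤ 1) :
    Tendsto (fun m => y ((m + 1) * (m + 1) + (2 + 2 * m))) atTop (𝓝 (√3 - 1)) := by
  obtain ⟨hl, hu⟩ := sqrt_three_mem
  refine tendsto_of_abs_sub_le_pow fun m => abs_sub_le_pow_of_forward
    (w := fun i => y ((m + 1) * (m + 1) + (2 + 2 * i))) ?_ fun i hi => ?_
  · rw [abs_le]
    constructor <;> linarith [hy ((m + 1) * (m + 1) + (2 + 2 * 0)),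
      h.nonneg ((m + 1) * (m + 1) + (2 + 2 * 0))]
  · have := abs_one_two_sub_le (h.nonneg ((m + 1) * (m + 1) + (2 + 2 * i)))
    simp only [show (m + 1) * (m + 1) + (2 + 2 * (i + 1)) =
      (m + 1) * (m + 1) + (2 + 2 * i) + 1 + 1 by ring]
    rw [h.succ_eq, h.succ_eq, perronDigit_of_lt (by omega), perronDigit_of_add_one_lt (by omega)]
    exact_mod_cast this

theorem tendsto_forward_perronDigit (h : IsQuotientChain perronDigit x y) :
    Tendsto (fun m => 1 / x ((m + 2) * (m + 2) + 3)) atTop (𝓝 (√3 - 1)) := by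
  obtain ⟨hl, hu⟩ := sqrt_three_mem
  refine tendsto_of_abs_sub_le_pow fun m => abs_sub_le_pow_of_backward
    (w := fun i => 1 / x ((m + 2) * (m + 2) + (2 + 2 * i) + 1)) ?_ fun i hi => ?_
  · have h1 := h.one_lt ((m + 2) * (m + 2) + (2 + 2 * m) + 1)
    have h2 := (div_le_one (by linarith)).2 h1.le
    have h3 : 0 ≤ 1 / x ((m + 2) * (m + 2) + (2 + 2 * m) + 1) := by positivity
    rw [abs_le]
    constructor <;> linarith
  · have h1 := h.one_lt ((m + 2) * (m + 2) + (2 + 2 * (i + 1)) + 1)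
    have := abs_one_two_sub_le
      (show 0 ≤ 1 / x ((m + 2) * (m + 2) + (2 + 2 * (i + 1)) + 1) by positivity)
    rw [h.eq_add ((m + 2) * (m + 2) + (2 + 2 * i) + 1), perronDigit_of_add_one_lt (by omega),
      show (m + 2) * (m + 2) + (2 + 2 * i) + 1 + 1 =
        (m + 2) * (m + 2) + (2 + 2 * (i + 1)) by ring,
      h.eq_add ((m + 2) * (m + 2) + (2 + 2 * (i + 1))), perronDigit_of_lt (by omega)]
    exact_mod_cast this

theorem tendsto_perronDigit (h : IsQuotientChain perronDigit x y) (hy : ∀ n, y n ≤ 1) :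
    Tendsto (fun m => x ((m + 2) * (m + 2)) + y ((m + 2) * (m + 2))) atTop
      (𝓝 ((65 + 9 * √3) / 22)) ∧
    Tendsto (fun m => x ((m + 2) * (m + 2) + 1) + y ((m + 2) * (m + 2) + 1)) atTop
      (𝓝 ((65 + 9 * √3) / 22)) := by
  have hY := h.tendsto_backward_perronDigit hy
  have hZ := h.tendsto_forward_perronDigit
  obtain ⟨hl, hu⟩ := sqrt_three_mem
  have h3 : √3 * √3 = 3 := Real.mul_self_sqrt (by norm_num)
  have hd0 : ∀ m, perronDigit ((m + 2) * (m + 2)) = 3 := fun m => by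
    simpa using perronDigit_mul_self_add (k := m + 2) (j := 0) (by omega)
  have hd1 : ∀ m, perronDigit ((m + 2) * (m + 2) + 1) = 3 := fun m => by
    simpa using perronDigit_mul_self_add (k := m + 2) (j := 1) (by omega)
  have hd2 : ∀ m, perronDigit ((m + 2) * (m + 2) + 2) = 2 := fun m =>
    perronDigit_of_lt (k := m + 2) (i := 0) (by omega)
  have hx2 : ∀ m, x ((m + 2) * (m + 2) + 2) = 2 + 1 / x ((m + 2) * (m + 2) + 3) := fun m => by
    rw [h.eq_add, hd2]
    norm_num
  have hx1 : ∀ m, x ((m + 2) * (m + 2) + 1) = 3 + 1 / x ((m + 2) * (m + 2) + 2) := fun m => by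
    rw [h.eq_add, hd1]
    norm_num
  have hx0 : ∀ m, x ((m + 2) * (m + 2)) = 3 + 1 / x ((m + 2) * (m + 2) + 1) := fun m => by
    rw [h.eq_add, hd0]
    norm_num
  have hy0 : ∀ m, y ((m + 2) * (m + 2)) = 1 / (2 + y ((m + 1) * (m + 1) + (2 + 2 * m))) :=
    fun m => by
      rw [show (m + 2) * (m + 2) = (m + 1) * (m + 1) + (2 + 2 * m) + 1 by ring, h.succ_eq,
        perronDigit_of_lt (by omega)]
      norm_num
  have hy1 : ∀ m, y ((m + 2) * (m + 2) + 1) = 1 / (3 + y ((m + 2) * (m + 2))) := fun m => by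
    rw [h.succ_eq, hd0]
    norm_num
  have key : ∀ u v : ℕ → ℝ, Tendsto u atTop (𝓝 (√3 - 1)) → Tendsto v atTop (𝓝 (√3 - 1)) →
      Tendsto (fun m => 3 + 1 / (3 + 1 / (2 + u m)) + 1 / (2 + v m)) atTop
        (𝓝 ((65 + 9 * √3) / 22)) := by
    intro u v hu' hv'
    have h2 : 2 + (√3 - 1) ≠ 0 := by linarith
    have h2' : 1 + √3 ≠ 0 := by positivity
    have h4 : 3 + 1 / (2 + (√3 - 1)) ≠ 0 := by
      have : 0 < 1 / (2 + (√3 - 1)) := one_div_pos.2 (by linarith)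
      linarith
    have e : (65 + 9 * √3) / 22 = 3 + 1 / (3 + 1 / (2 + (√3 - 1))) + 1 / (2 + (√3 - 1)) := by
      have e1 : 1 / (2 + (√3 - 1)) = (√3 - 1) / 2 := by
        rw [div_eq_div_iff h2 two_ne_zero]
        linear_combination -h3
      have e2 : 1 / (3 + (√3 - 1) / 2) = (5 - √3) / 11 := by
        rw [div_eq_div_iff (by linarith) (by norm_num)]
        linear_combination h3 / 2
      rw [e1, e2]
      ring
    rw [e]
    exact ((tendsto_const_nhds.div ((tendsto_const_nhds.div (hu'.const_add 2) h2).const_add 3)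
      h4).const_add 3).add (tendsto_const_nhds.div (hv'.const_add 2) h2)
  constructor
  · refine (key _ _ hZ hY).congr fun m => ?_
    rw [hx0, hx1, hx2, hy0]
  · refine (key _ _ hY hZ).congr fun m => ?_
    rw [hx1, hx2, hy1, hy0]
    ring

theorem add_le_of_perronDigit_le_two (h : IsQuotientChain perronDigit x y)
    (hx : ∀ n, x n ≤ 4) (hy : ∀ n, y n ≤ 1) {n : ℕ} (hn : perronDigit (n + 2) ≤ 2) :
    x (n + 2) + y (n + 2) ≤ 3.6 := by
  have h2 : (perronDigit (n + 2) : ℝ) ≤ 2 := by exact_mod_cast hn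
  have hge : ∀ n, (1 : ℝ) ≤ perronDigit n := fun n => by exact_mod_cast (perronDigit_mem n).1
  have hle : ∀ n, (perronDigit n : ℝ) ≤ 3 := fun n => by exact_mod_cast (perronDigit_mem n).2
  have hx3 : 5 / 4 ≤ x (n + 3) := by
    have : 1 / 4 ≤ 1 / x (n + 4) :=
      one_div_le_one_div_of_le (by linarith [h.one_lt (n + 4)]) (hx _)
    rw [h.eq_add]
    linarith [hge (n + 3)]
  have hy1 : 1 / 4 ≤ y (n + 1) := by
    rw [h.succ_eq]
    exact one_div_le_one_div_of_le (by linarith [hge n, h.nonneg n]) (by linarith [hle n, hy n])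
  have hy2 : y (n + 2) ≤ 1 / (5 / 4) := by
    rw [h.succ_eq]
    exact one_div_le_one_div_of_le (by norm_num) (by linarith [hge (n + 1)])
  have hx3' : 1 / x (n + 3) ≤ 1 / (5 / 4) := one_div_le_one_div_of_le (by norm_num) hx3
  rw [h.eq_add]
  norm_num at *
  linarith

end IsQuotientChain

theorem perron_mem_lagrangeSpectrum : (65 + 9 * √3) / 22 ∈ LagrangeSpectrum := by
  obtain ⟨hl, hu⟩ := sqrt_three_mem
  have h1 : ∀ n, 1 ≤ perronDigit n := fun n => (perronDigit_mem n).1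
  obtain ⟨x, hx, heq⟩ := exists_quotients h1 fun n => (perronDigit_mem n).2
  have h := isQuotientChain_backwardQuotient h1 (fun n => by linarith [(hx n).1]) heq
  set y := backwardQuotient perronDigit
  have hy : ∀ n, y n ≤ 1 := fun n => (backwardQuotient_mem_Icc h1 n).2
  obtain ⟨hlim0, hlim1⟩ := h.tendsto_perronDigit hy
  refine h.mem_lagrangeSpectrum rfl (by linarith) (fun n => by linarith [(hx n).2, hy n])
    (fun ε hε => ?_) (fun ε hε => ?_)
  · obtain ⟨K, hK⟩ := eventually_atTop.1 ((hlim0.eventually_le_const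
      (show (65 + 9 * √3) / 22 < (65 + 9 * √3) / 22 + ε by linarith)).and
      (hlim1.eventually_le_const (show (65 + 9 * √3) / 22 < (65 + 9 * √3) / 22 + ε by linarith)))
    filter_upwards [eventually_ge_atTop ((K + 2) * (K + 2))] with n hn
    have hm := Nat.le_sqrt.2 hn
    obtain ⟨m, hm'⟩ := Nat.exists_eq_add_of_le (show 2 ≤ n.sqrt by omega)
    obtain ⟨j, hj⟩ := Nat.exists_eq_add_of_le (Nat.sqrt_le n)
    have hj2 := Nat.sqrt_le_add n
    rw [hm', add_comm 2 m] at hj hj2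
    have hjle : j ≤ (m + 2) + (m + 2) := by omega
    obtain ⟨hK0, hK1⟩ := hK m (by omega)
    match j, hj, hjle with
    | 0, hj, _ => rwa [hj]
    | 1, hj, _ => rwa [hj]
    | j + 2, hj, hjle =>
      have hd : perronDigit n ≤ 2 := by
        rw [hj, perronDigit_mul_self_add hjle]
        split_ifs <;> omega
      obtain ⟨i, rfl⟩ := Nat.exists_eq_add_of_le' (show 2 ≤ n by omega)
      have := h.add_le_of_perronDigit_le_two (fun n => (hx n).2) hy hd
      norm_num at *
      linarith
  · have hind : Tendsto (fun m : ℕ => (m + 2) * (m + 2)) atTop atTop :=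
      tendsto_atTop_mono (fun m => by dsimp only [id]; nlinarith) tendsto_id
    exact hind.frequently (hlim0.eventually_const_le (by linarith)).frequently

end

/-- **Perron**: `√12`, `√13` and `(65 + 9√3)/22` belong to the Lagrange spectrum, while
`M ∩ (√12, √13) = ∅` and `M ∩ (√13, (65 + 9√3)/22) = ∅`; in particular these two open
intervals are gaps of both spectra. -/
theorem perron_gaps :
    Real.sqrt 12 ∈ LagrangeSpectrum ∧
    Real.sqrt 13 ∈ LagrangeSpectrum ∧
    (65 + 9 * Real.sqrt 3) / 22 ∈ LagrangeSpectrum ∧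
    MarkovSpectrum ∩ Set.Ioo (Real.sqrt 12) (Real.sqrt 13) = ∅ ∧
    MarkovSpectrum ∩ Set.Ioo (Real.sqrt 13) ((65 + 9 * Real.sqrt 3) / 22) = ∅ ∧
    LagrangeSpectrum ∩ Set.Ioo (Real.sqrt 12) (Real.sqrt 13) = ∅ ∧
    LagrangeSpectrum ∩ Set.Ioo (Real.sqrt 13) ((65 + 9 * Real.sqrt 3) / 22) = ∅ := by
  have hlt : √13 < (65 + 9 * √3) / 22 := by
    linarith [sqrt_three_mem.1, sqrt_thirteen_mem.2]
  have h12 : √12 < √13 := Real.sqrt_lt_sqrt (by norm_num) (by norm_num)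
  have hM1 : ∀ t ∈ MarkovSpectrum, ¬ (√12 < t ∧ t < √13) := by
    rintro t hM ⟨h, h'⟩
    rcases markovSpectrum_le_or_eq hM (h'.trans hlt) with h'' | h'' <;> linarith
  have hM2 : ∀ t ∈ MarkovSpectrum, ¬ (√13 < t ∧ t < (65 + 9 * √3) / 22) := by
    rintro t hM ⟨h, h'⟩
    rcases markovSpectrum_le_or_eq hM h' with h'' | h'' <;> linarith
  refine ⟨sqrt_twelve_mem_lagrangeSpectrum, sqrt_thirteen_mem_lagrangeSpectrum,
    perron_mem_lagrangeSpectrum, Set.eq_empty_iff_forall_notMem.2 fun t ht => hM1 t ht.1 ht.2,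
    Set.eq_empty_iff_forall_notMem.2 fun t ht => hM2 t ht.1 ht.2,
    Set.eq_empty_iff_forall_notMem.2 fun t ht => hM1 t ?_ ht.2,
    Set.eq_empty_iff_forall_notMem.2 fun t ht => hM2 t ?_ ht.2⟩
  · exact mem_markovSpectrum_of_mem_lagrangeSpectrum ht.1 ((Real.sqrt_nonneg _).trans_lt ht.2.1)
  · exact mem_markovSpectrum_of_mem_lagrangeSpectrum ht.1 ((Real.sqrt_nonneg _).trans_lt ht.2.1)
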